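/- arXiv:1703.00677 — 3 statements merged into one kernel-verified Lean document; each statement's English description precedes it below -/
import Mathlib

section
/- Let (S,d) be a complete separable metric space and let (μ_n) be a sequence of finite signed Borel measures on S such that sup_n ‖μ_n‖_TV < ∞. If for every f ∈ BL(S) the sequence of integrals ∫_S f dμ_n converges in ℝ, then there exists a finite signed Borel measure μ on S such that ‖μ_n − μ‖*_BL → 0 as n → ∞. -/
open MeasureTheory Filter Topology

/-- A function is bounded Lipschitz. -/
def IsBL {S : Type*} [PseudoMetricSpace S] (f : S → ℝ) : Prop :=
  (∃ C : ℝ, ∀ x, |f x| ≤ C) ∧ ∃ K : NNReal, LipschitzWith K f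

/-- Pairing of a finite signed Borel measure with a function, via the Jordan decomposition:
`⟨μ, f⟩ = ∫ f dμ⁺ - ∫ f dμ⁻`. -/
noncomputable def pairing {S : Type*} [MeasurableSpace S] (μ : SignedMeasure S) (f : S → ℝ) : ℝ :=
  (∫ x, f x ∂μ.toJordanDecomposition.posPart) - ∫ x, f x ∂μ.toJordanDecomposition.negPart

/-- Total variation norm of a finite signed measure: `‖μ‖_TV = |μ|(S)`. -/
noncomputable def tvNorm {S : Type*} [MeasurableSpace S] (μ : SignedMeasure S) : ℝ :=
  (μ.totalVariation Set.univ).toReal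

/-- Dual bounded Lipschitz norm:
`‖μ‖*_BL = sup { |⟨μ, f⟩| : f ∈ BL(S), ‖f‖_∞ + |f|_L ≤ 1 }`. -/
noncomputable def blDualNorm {S : Type*} [PseudoMetricSpace S] [MeasurableSpace S]
    (μ : SignedMeasure S) : ℝ :=
  sSup {r : ℝ | ∃ (f : S → ℝ) (C : ℝ) (K : NNReal), (∀ x, |f x| ≤ C) ∧
    LipschitzWith K f ∧ C + (K : ℝ) ≤ 1 ∧ r = |pairing μ f|}

set_option linter.unusedSectionVars false

namespace SchurBL

/-- Bounded by `C` and `K`-Lipschitz. -/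
def B {S : Type*} [PseudoMetricSpace S] (C K : ℝ) (f : S → ℝ) : Prop :=
  (∀ x, |f x| ≤ C) ∧ ∀ x y, |f x - f y| ≤ K * dist x y

/-- soft threshold -/
noncomputable def sth {S : Type*} (η : ℝ) (f : S → ℝ) : S → ℝ :=
  fun x => f x - max (-η) (min η (f x))

/-- distance to first points -/
noncomputable def D {S : Type*} [PseudoMetricSpace S] (p : ℕ → S) (N : ℕ) (x : S) : ℝ :=
  Metric.infDist x (p '' Set.Iic N)

/-- cutoff -/
noncomputable def cut {S : Type*} [PseudoMetricSpace S] (p : ℕ → S) (δ : ℝ) (N : ℕ)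
    (f : S → ℝ) : S → ℝ :=
  fun x => max (-(max 0 (2 - 2 * D p N x / δ))) (min (max 0 (2 - 2 * D p N x / δ)) (f x))

section basic
variable {S : Type*} [MetricSpace S]

lemma B.isBL {C K : ℝ} {f : S → ℝ} (h : B C K f) : IsBL f := by
  refine ⟨⟨C, h.1⟩, K.toNNReal, ?_⟩
  apply LipschitzWith.of_dist_le_mul
  intro x y
  rw [Real.dist_eq]
  refine (h.2 x y).trans ?_
  have : K ≤ K.toNNReal := Real.le_coe_toNNReal K
  gcongr

lemma exists_B {f : S → ℝ} (h : IsBL f) : ∃ C K, 0 ≤ C ∧ 0 ≤ K ∧ B C K f := by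
  obtain ⟨⟨C, hC⟩, K, hK⟩ := h
  refine ⟨|C|, K, abs_nonneg _, K.2, fun x => (hC x).trans (le_abs_self _), fun x y => ?_⟩
  have := hK.dist_le_mul x y
  rwa [Real.dist_eq] at this

lemma B.cont {C K : ℝ} {f : S → ℝ} (h : B C K f) : Continuous f :=
  h.isBL.2.choose_spec.continuous

lemma B.mono {C K C' K' : ℝ} {f : S → ℝ} (h : B C K f) (hC : C ≤ C') (hK : K ≤ K') :
    B C' K' f :=
  ⟨fun x => (h.1 x).trans hC, fun x y => (h.2 x y).trans (by gcongr)⟩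

lemma B.sub {C K C' K' : ℝ} {f g : S → ℝ} (h : B C K f) (h' : B C' K' g) :
    B (C + C') (K + K') (fun x => f x - g x) := by
  refine ⟨fun x => ?_, fun x y => ?_⟩
  · have := h.1 x; have := h'.1 x; have := abs_sub (f x) (g x); linarith
  · have h1 := h.2 x y; have h2 := h'.2 x y
    rw [abs_le] at *
    constructor <;> nlinarith

lemma B.add {C K C' K' : ℝ} {f g : S → ℝ} (h : B C K f) (h' : B C' K' g) :
    B (C + C') (K + K') (fun x => f x + g x) := by
  refine ⟨fun x => ?_, fun x y => ?_⟩
  · have := h.1 x; have := h'.1 x; have := abs_add_le (f x) (g x); linarith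
  · have h1 := h.2 x y; have h2 := h'.2 x y
    rw [abs_le] at *
    constructor <;> nlinarith

lemma B.smul {C K : ℝ} {f : S → ℝ} (c : ℝ) (h : B C K f) :
    B (|c| * C) (|c| * K) (fun x => c * f x) := by
  refine ⟨fun x => ?_, fun x y => ?_⟩
  · rw [abs_mul]; have := h.1 x; gcongr
  · rw [← mul_sub, abs_mul, mul_assoc]; have := h.2 x y; gcongr

lemma isBL_const (c : ℝ) : IsBL (fun _ : S => c) :=
  B.isBL (C := |c|) (K := 0) ⟨fun _ => le_rfl, fun _ _ => by simp⟩

lemma isBL_sub {f g : S → ℝ} (h : IsBL f) (h' : IsBL g) : IsBL (fun x => f x - g x) := by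
  obtain ⟨_, _, _, _, h⟩ := exists_B h
  obtain ⟨_, _, _, _, h'⟩ := exists_B h'
  exact (h.sub h').isBL

lemma isBL_add {f g : S → ℝ} (h : IsBL f) (h' : IsBL g) : IsBL (fun x => f x + g x) := by
  obtain ⟨_, _, _, _, h⟩ := exists_B h
  obtain ⟨_, _, _, _, h'⟩ := exists_B h'
  exact (h.add h').isBL

lemma isBL_smul {f : S → ℝ} (c : ℝ) (h : IsBL f) : IsBL (fun x => c * f x) := by
  obtain ⟨_, _, _, _, h⟩ := exists_B h
  exact (h.smul c).isBL

lemma isBL_sum {ι : Type*} (s : Finset ι) {f : ι → S → ℝ} (h : ∀ i ∈ s, IsBL (f i)) :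
    IsBL (fun x => ∑ i ∈ s, f i x) := by
  classical
  induction s using Finset.induction_on with
  | empty => simpa using isBL_const (S := S) 0
  | insert a s ha ih =>
    simp only [Finset.sum_insert ha]
    exact isBL_add (h a (by simp)) (ih fun i hi => h i (by simp [hi]))

lemma abs_max_sub_max_le' (a b c d r : ℝ) (h1 : |a - c| ≤ r) (h2 : |b - d| ≤ r) :
    |max a b - max c d| ≤ r := (abs_max_sub_max_le_max a b c d).trans (max_le h1 h2)

lemma abs_min_sub_min_le' (a b c d r : ℝ) (h1 : |a - c| ≤ r) (h2 : |b - d| ≤ r) :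
    |min a b - min c d| ≤ r := (abs_min_sub_min_le_max a b c d).trans (max_le h1 h2)

lemma isBL_max {f g : S → ℝ} (h : IsBL f) (h' : IsBL g) : IsBL (fun x => max (f x) (g x)) := by
  obtain ⟨C, K, h0, h1, h⟩ := exists_B h
  obtain ⟨C', K', h0', h1', h'⟩ := exists_B h'
  refine B.isBL (C := C + C') (K := K + K') ⟨fun x => ?_, fun x y => ?_⟩
  · have := h.1 x; have := h'.1 x
    show |max (f x) (g x)| ≤ _
    rcases max_cases (f x) (g x) with h | h <;> rw [h.1] <;> linarith
  · apply abs_max_sub_max_le'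
    · have := h.2 x y
      nlinarith [dist_nonneg (x := x) (y := y)]
    · have := h'.2 x y
      nlinarith [dist_nonneg (x := x) (y := y)]

lemma sth_real (η a b : ℝ) (hη : 0 ≤ η) :
    |(a - max (-η) (min η a)) - (b - max (-η) (min η b))| ≤ |a - b| := by
  grind [abs_le, abs_of_nonneg, abs_of_neg]

lemma B.sth {C K η : ℝ} {f : S → ℝ} (h : B C K f) (hη : 0 ≤ η) : B C K (sth η f) := by
  refine ⟨fun x => ?_, fun x y => (sth_real η _ _ hη).trans (h.2 x y)⟩
  have := sth_real η (f x) 0 hη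
  simp only [hη, min_eq_right, Left.neg_nonpos_iff, max_eq_right, sub_zero] at this
  exact this.trans (h.1 x)

lemma sth_sub {η : ℝ} {f : S → ℝ} (hη : 0 ≤ η) (x : S) : |f x - SchurBL.sth η f x| ≤ η := by
  unfold SchurBL.sth
  grind [abs_le]

lemma sth_zero {η : ℝ} {f : S → ℝ} (x : S) (h : |f x| ≤ η) : SchurBL.sth η f x = 0 := by
  unfold SchurBL.sth
  rw [abs_le] at h
  rw [min_eq_right h.2, max_eq_right h.1, sub_self]

variable (p : ℕ → S)

lemma D_nonneg (N : ℕ) (x : S) : 0 ≤ D p N x := Metric.infDist_nonneg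

lemma D_lip (N : ℕ) (x y : S) : |D p N x - D p N y| ≤ dist x y := by
  have := (Metric.lipschitz_infDist_pt (p '' Set.Iic N)).dist_le_mul x y
  simpa [Real.dist_eq, D] using this

lemma D_anti {N M : ℕ} (h : N ≤ M) (x : S) : D p M x ≤ D p N x :=
  Metric.infDist_le_infDist_of_subset (Set.image_mono (Set.Iic_subset_Iic.2 h))
    ⟨p 0, 0, by simp, rfl⟩

lemma D_lt {N : ℕ} {x : S} {r : ℝ} : D p N x < r ↔ ∃ j ≤ N, dist x (p j) < r := by
  unfold D
  have hne : (p '' Set.Iic N).Nonempty := ⟨p 0, 0, by simp, rfl⟩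
  rw [Metric.infDist_lt_iff hne]
  simp

lemma D_le_dist {N j : ℕ} (h : j ≤ N) (x : S) : D p N x ≤ dist x (p j) :=
  Metric.infDist_le_dist_of_mem ⟨j, h, rfl⟩

lemma D_self {N j : ℕ} (h : j ≤ N) : D p N (p j) = 0 :=
  le_antisymm (by simpa using D_le_dist p h (p j)) (D_nonneg _ _ _)

lemma D_cont (N : ℕ) : Continuous (D p N) := Metric.continuous_infDist_pt _

lemma abs_le_D {C K : ℝ} {f : S → ℝ} (h : B C K f) (hK : 0 ≤ K) {N : ℕ}
    (h0 : ∀ j ≤ N, f (p j) = 0) (x : S) : |f x| ≤ K * D p N x := by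
  rcases hK.eq_or_lt with rfl | hK
  · have := h.2 x (p 0); rw [h0 0 (by simp)] at this; simpa using this
  by_contra! hc
  have : D p N x < |f x| / K := by rwa [lt_div_iff₀' hK]
  obtain ⟨j, hj, hd⟩ := (D_lt p).1 this
  have h2 := h.2 x (p j)
  rw [h0 j hj, sub_zero] at h2
  rw [lt_div_iff₀' hK] at hd
  linarith

lemma cut_abs (δ : ℝ) (N : ℕ) (f : S → ℝ) (x : S) : |cut p δ N f x| ≤ |f x| := by
  unfold cut
  have : 0 ≤ max 0 (2 - 2 * D p N x / δ) := le_max_left _ _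
  generalize max 0 (2 - 2 * D p N x / δ) = v at *
  grind [abs_le]

lemma cut_zero {δ : ℝ} (hδ : 0 < δ) {N : ℕ} (f : S → ℝ) {x : S} (h : δ ≤ D p N x) :
    cut p δ N f x = 0 := by
  unfold cut
  have : max 0 (2 - 2 * D p N x / δ) = 0 := by
    apply max_eq_left
    have : 1 ≤ D p N x / δ := by rwa [le_div_iff₀ hδ, one_mul]
    rw [mul_div_assoc]; linarith
  rw [this]
  grind

lemma cut_eq {δ : ℝ} (hδ : 0 < δ) {N : ℕ} {f : S → ℝ} {x : S} (hf : |f x| ≤ 1)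
    (h : D p N x ≤ δ / 2) : cut p δ N f x = f x := by
  unfold cut
  have : 1 ≤ max 0 (2 - 2 * D p N x / δ) := by
    apply le_max_of_le_right
    have : D p N x / δ ≤ 1 / 2 := by rw [div_le_iff₀ hδ]; linarith
    rw [mul_div_assoc]; linarith
  rw [abs_le] at hf
  rw [min_eq_right (by linarith), max_eq_right (by linarith)]

lemma cut_lip {C K L δ : ℝ} (hδ : 0 < δ) (N : ℕ) {f : S → ℝ} (h : B C K f) (hKL : K ≤ L)
    (hL : 2 / δ ≤ L) : B C L (cut p δ N f) := by
  refine ⟨fun x => (cut_abs p δ N f x).trans (h.1 x), fun x y => ?_⟩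
  have hv : |max 0 (2 - 2 * D p N x / δ) - max 0 (2 - 2 * D p N y / δ)| ≤ L * dist x y := by
    apply abs_max_sub_max_le'
    · have : 0 ≤ L := le_trans (by positivity) hL
      simp only [sub_self, abs_zero]; positivity
    · have h1 := D_lip p N x y
      have : 2 - 2 * D p N x / δ - (2 - 2 * D p N y / δ) = (2 / δ) * (D p N y - D p N x) := by ring
      rw [this, abs_mul, abs_sub_comm, abs_of_pos (by positivity : 0 < 2 / δ)]
      have : 0 ≤ L := le_trans (by positivity) hL
      gcongr
  unfold cut
  apply abs_max_sub_max_le'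
  · rwa [← abs_neg, show ∀ a b : ℝ, -(-a - -b) = a - b by intros; ring]
  · apply abs_min_sub_min_le' _ _ _ _ _ hv
    exact (h.2 x y).trans (by gcongr)

end basic

section pair
variable {S : Type*} [MetricSpace S] [MeasurableSpace S] [BorelSpace S]

lemma isBL_integrable {f : S → ℝ} (h : IsBL f) (m : Measure S) [IsFiniteMeasure m] :
    Integrable f m := by
  obtain ⟨⟨C, hC⟩, K, hK⟩ := h
  exact Integrable.of_bound hK.continuous.measurable.aestronglyMeasurable C
    (Eventually.of_forall hC)

lemma pairing_sub_fun (μ : SignedMeasure S) {f g : S → ℝ} (hf : IsBL f) (hg : IsBL g) :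
    pairing μ (fun x => f x - g x) = pairing μ f - pairing μ g := by
  unfold pairing
  rw [integral_sub (isBL_integrable hf _) (isBL_integrable hg _),
    integral_sub (isBL_integrable hf _) (isBL_integrable hg _)]
  ring

lemma pairing_add_fun (μ : SignedMeasure S) {f g : S → ℝ} (hf : IsBL f) (hg : IsBL g) :
    pairing μ (fun x => f x + g x) = pairing μ f + pairing μ g := by
  unfold pairing
  rw [integral_add (isBL_integrable hf _) (isBL_integrable hg _),
    integral_add (isBL_integrable hf _) (isBL_integrable hg _)]
  ring

lemma pairing_smul_fun (μ : SignedMeasure S) (c : ℝ) (f : S → ℝ) :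
    pairing μ (fun x => c * f x) = c * pairing μ f := by
  unfold pairing
  rw [integral_const_mul, integral_const_mul]
  ring

lemma pairing_le (μ : SignedMeasure S) {f : S → ℝ} {M : ℝ}
    (hM : ∀ x, |f x| ≤ M) {A : Set S} (h0 : ∀ x, x ∉ A → f x = 0) :
    |pairing μ f| ≤ M * (μ.totalVariation.real A) := by
  have key : ∀ m : Measure S, IsFiniteMeasure m → |∫ x, f x ∂m| ≤ M * m.real A := by
    intro m _
    have : ∫ x, f x ∂m = ∫ x in A, f x ∂m := by
      rw [setIntegral_eq_integral_of_forall_compl_eq_zero]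
      intro x hx; exact h0 x hx
    rw [this]
    exact norm_setIntegral_le_of_norm_le_const (f := f) (C := M) (measure_lt_top m A)
      (fun x _ => hM x)
  have h1 := key μ.toJordanDecomposition.posPart inferInstance
  have h2 := key μ.toJordanDecomposition.negPart inferInstance
  have h3 : μ.totalVariation.real A = μ.toJordanDecomposition.posPart.real A
      + μ.toJordanDecomposition.negPart.real A := by
    unfold SignedMeasure.totalVariation
    rw [measureReal_add_apply]
  unfold pairing
  rw [h3, mul_add]
  exact (abs_sub _ _).trans (add_le_add h1 h2)

lemma pairing_eq (s : SignedMeasure S) (α β : Measure S) [IsFiniteMeasure α] [IsFiniteMeasure β]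
    (h : s = α.toSignedMeasure - β.toSignedMeasure) {f : S → ℝ} (hf : IsBL f) :
    pairing s f = ∫ x, f x ∂α - ∫ x, f x ∂β := by
  have h1 : s.toJordanDecomposition.posPart + β = s.toJordanDecomposition.negPart + α := by
    rw [← Measure.toSignedMeasure_eq_toSignedMeasure_iff, Measure.toSignedMeasure_add,
      Measure.toSignedMeasure_add]
    have h2 := s.toSignedMeasure_toJordanDecomposition
    unfold JordanDecomposition.toSignedMeasure at h2
    rw [h, sub_eq_sub_iff_add_eq_add] at h2
    rw [h, h2, add_comm]
  have h2 := congrArg (fun m => ∫ x, f x ∂m) h1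
  rw [integral_add_measure (isBL_integrable hf _) (isBL_integrable hf _),
    integral_add_measure (isBL_integrable hf _) (isBL_integrable hf _)] at h2
  unfold pairing
  linarith

lemma pairing_sub_meas (s t : SignedMeasure S) {f : S → ℝ} (hf : IsBL f) :
    pairing (s - t) f = pairing s f - pairing t f := by
  rw [pairing_eq (s - t) (s.toJordanDecomposition.posPart + t.toJordanDecomposition.negPart)
    (s.toJordanDecomposition.negPart + t.toJordanDecomposition.posPart) _ hf]
  · rw [integral_add_measure (isBL_integrable hf _) (isBL_integrable hf _),
      integral_add_measure (isBL_integrable hf _) (isBL_integrable hf _)]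
    unfold pairing
    ring
  · rw [Measure.toSignedMeasure_add, Measure.toSignedMeasure_add]
    conv_lhs => rw [← s.toSignedMeasure_toJordanDecomposition,
      ← t.toSignedMeasure_toJordanDecomposition]
    unfold JordanDecomposition.toSignedMeasure
    abel

lemma exists_tight {p : ℕ → S} (hp : DenseRange p) (m : Measure S) [IsFiniteMeasure m]
    {η r : ℝ} (hη : 0 < η) (hr : 0 < r) : ∃ N, m.real {x | r < D p N x} ≤ η := by
  have hm : ∀ N, MeasurableSet {x | r < D p N x} := fun N =>
    (isOpen_lt continuous_const (D_cont p N)).measurableSet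
  have ha : Antitone (fun N => {x | r < D p N x}) := fun N M h x hx =>
    lt_of_lt_of_le hx (D_anti p h x)
  have h := tendsto_measure_iInter_atTop (μ := m) (fun N => (hm N).nullMeasurableSet) ha
    ⟨0, measure_ne_top _ _⟩
  have he : ⋂ N, {x | r < D p N x} = ∅ := by
    ext x
    simp only [Set.mem_iInter, Set.mem_ofPred_eq, Set.mem_empty_iff_false, iff_false, not_forall,
      not_lt]
    obtain ⟨j, hj⟩ := hp.exists_dist_lt x hr
    exact ⟨j, (D_le_dist p le_rfl x).trans hj.le⟩
  rw [he, measure_empty] at h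
  obtain ⟨N, hN⟩ := (h.eventually_le_const (show (0 : ENNReal) < ENNReal.ofReal η by simpa)).exists
  exact ⟨N, ENNReal.toReal_le_of_le_ofReal hη.le hN⟩

lemma exists_tight' {p : ℕ → S} (hp : DenseRange p) (m : ℕ → Measure S)
    [∀ n, IsFiniteMeasure (m n)] {η r : ℝ} (hη : 0 < η) (hr : 0 < r) (k : ℕ) :
    ∃ N, ∀ i ≤ k, ∀ N' ≥ N, (m i).real {x | r < D p N' x} ≤ η := by
  choose N hN using fun i => exists_tight hp (m i) hη hr
  refine ⟨(Finset.range (k + 1)).sup N, fun i hi N' h => le_trans (measureReal_mono ?_) (hN i)⟩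
  intro x hx
  refine lt_of_lt_of_le hx (D_anti p (le_trans ?_ h) x)
  exact Finset.le_sup (f := N) (by simp; omega)

end pair

section hump
variable {S : Type*} [MetricSpace S] [MeasurableSpace S] [BorelSpace S]

lemma pairing_le_C (μ : SignedMeasure S) {C M : ℝ} (hC : tvNorm μ ≤ C) (hM0 : 0 ≤ M) {f : S → ℝ}
    (hM : ∀ x, |f x| ≤ M) : |pairing μ f| ≤ M * C := by
  have := pairing_le μ hM (A := Set.univ) (by simp)
  refine this.trans ?_
  gcongr
  exact hC

lemma hump_step {p : ℕ → S} (hp : DenseRange p) (μ : ℕ → SignedMeasure S)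
    {C : ℝ} (hC : 0 < C) (hTV : ∀ n, tvNorm (μ n) ≤ C)
    (hconv : ∀ f : S → ℝ, IsBL f → ∃ l : ℝ, Tendsto (fun n => pairing (μ n) f) atTop (𝓝 l))
    {ε δ L : ℝ} (hε : 0 < ε) (hδ : 0 < δ) (hδC : 2 * δ * C ≤ ε / 4) (hL1 : 1 ≤ L) (hL : 2 / δ ≤ L)
    (hbad : ∀ N, ∃ n f, B 1 1 f ∧ (∀ j ≤ N, f (p j) = 0) ∧ ε < |pairing (μ n) f|)
    (k N : ℕ) (G : S → ℝ) (hG : B 1 L G) (hG0 : ∀ x, δ ≤ D p N x → G x = 0) :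
    ∃ N' ≥ N, ∃ G' : S → ℝ, B 1 L G' ∧ (∀ x, δ ≤ D p N' x → G' x = 0) ∧
      (∀ x, D p N x ≤ 2 * δ → G' x = G x) ∧ ∃ m ≥ k, ∃ n ≥ k,
        (μ m).totalVariation.real {x | 2 * δ < D p N' x} ≤ ε / 64 ∧
        (μ n).totalVariation.real {x | 2 * δ < D p N' x} ≤ ε / 64 ∧
        ε / 4 ≤ |pairing (μ n) G' - pairing (μ m) G'| := by
  have hη : 0 < ε / 64 := by positivity
  -- choose m
  obtain ⟨l, hl⟩ := hconv G hG.isBL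
  obtain ⟨m₀, hm₀⟩ := Metric.tendsto_atTop.1 hl (ε / 32) (by positivity)
  set m := max k m₀ with hm
  have hGm : ∀ i ≥ m, |pairing (μ i) G - pairing (μ m) G| ≤ ε / 16 := by
    intro i hi
    have h1 := hm₀ i (le_trans (le_max_right _ _) hi)
    have h2 := hm₀ m (le_max_right _ _)
    rw [Real.dist_eq, abs_lt] at h1 h2
    rw [abs_le]; constructor <;> linarith
  obtain ⟨N₁, hN₁⟩ := exists_tight' hp (fun i => (μ i).totalVariation) hη
    (by positivity : 0 < 2 * δ) m
  set N₂ := max N N₁ with hN₂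
  obtain ⟨n, f, hf, hf0, hfn⟩ := hbad N₂
  set f' := sth (2 * δ) f with hf'
  have hf'B : B 1 1 f' := hf.sth (by positivity)
  have hf'0 : ∀ x, D p N₂ x ≤ 2 * δ → f' x = 0 := by
    intro x hx
    apply sth_zero
    have := abs_le_D p hf zero_le_one hf0 x
    linarith
  have hf'n : 3 * ε / 4 < |pairing (μ n) f'| := by
    have h1 := pairing_le_C (μ n) (hTV n) (by positivity : 0 ≤ 2 * δ)
      (f := fun x => f x - f' x) (fun x => sth_sub (by positivity) x)
    rw [pairing_sub_fun _ hf.isBL hf'B.isBL] at h1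
    have := abs_sub_abs_le_abs_sub (pairing (μ n) f) (pairing (μ n) f')
    linarith
  have hsmall : ∀ i ≤ m, ∀ g : S → ℝ, (∀ x, |g x| ≤ |f' x|) → |pairing (μ i) g| ≤ ε / 64 := by
    intro i hi g hg
    have h1 := pairing_le (μ i) (f := g) (M := 1) (fun x => (hg x).trans (hf'B.1 x))
      (A := {x | 2 * δ < D p N₂ x}) (fun x hx => by
        have h2 := hf'0 x (by simpa using hx)
        have h3 := hg x
        rw [h2, abs_zero] at h3
        exact abs_nonpos_iff.1 h3)
    have h2 := hN₁ i hi N₂ (le_max_right _ _)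
    linarith
  have hnm : m < n := by
    by_contra! h
    have := hsmall n h f' (fun _ => le_rfl)
    linarith
  obtain ⟨N₃, hN₃⟩ := exists_tight' hp (fun i => (μ i).totalVariation) hη
    (by positivity : 0 < δ / 2) n
  set N' := max N₂ N₃ with hN'
  set g := cut p δ N' f' with hg
  have hgB : B 1 L g := cut_lip p hδ N' hf'B hL1 hL
  have hgf : ∀ x, |g x| ≤ |f' x| := cut_abs p δ N' f'
  have hNN' : N ≤ N' := (le_max_left _ _).trans (le_max_left _ _)
  have hN₂N' : N₂ ≤ N' := le_max_left _ _
  have hg0 : ∀ x, D p N x ≤ 2 * δ → g x = 0 := by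
    intro x hx
    have h3 := hgf x
    rw [hf'0 x ((D_anti p (le_max_left _ _) x).trans hx), abs_zero] at h3
    exact abs_nonpos_iff.1 h3
  have hgn : 3 * ε / 4 - ε / 32 ≤ |pairing (μ n) g| := by
    have h1 := pairing_le (μ n) (f := fun x => f' x - g x) (M := 2)
      (fun x => by
        have := abs_sub (f' x) (g x); have := hf'B.1 x; have := hgB.1 x; linarith)
      (A := {x | δ / 2 < D p N' x}) (fun x hx => by
        have : g x = f' x := cut_eq p hδ (hf'B.1 x) (by simpa using hx)
        rw [this, sub_self])
    rw [pairing_sub_fun _ hf'B.isBL hgB.isBL] at h1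
    have h2 := hN₃ n le_rfl N' (le_max_right _ _)
    have := abs_sub_abs_le_abs_sub (pairing (μ n) f') (pairing (μ n) g)
    linarith
  refine ⟨N', hNN', fun x => G x + g x, ⟨fun x => ?_, fun x y => ?_⟩, fun x hx => ?_,
    fun x hx => ?_, m, le_max_left _ _, n, ?_, ?_, ?_, ?_⟩
  · show |G x + g x| ≤ 1
    rcases le_or_gt (D p N x) (2 * δ) with h | h
    · rw [hg0 x h, add_zero]; exact hG.1 x
    · rw [hG0 x (by linarith), zero_add]; exact hgB.1 x
  · -- Lipschitz
    have key : ∀ x y, 2 * δ < D p N x → D p N y ≤ 2 * δ →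
        |G x + g x - (G y + g y)| ≤ L * dist x y := by
      intro x y h h'
      rw [hG0 x (by linarith), hg0 y h', zero_add, add_zero]
      rcases le_or_gt δ (D p N y) with h2 | h2
      · have := hgB.2 x y
        rwa [hg0 y h', ← hG0 y h2] at this
      · have h3 := D_lip p N x y
        have h4 : δ ≤ dist x y := by rw [abs_le] at h3; linarith
        have h5 : 2 ≤ L * dist x y := by
          calc 2 = 2 / δ * δ := by field_simp
            _ ≤ L * dist x y := by gcongr
        have := abs_sub (g x) (G y); have := hgB.1 x; have := hG.1 y
        linarith
    rcases le_or_gt (D p N x) (2 * δ) with h | h <;> rcases le_or_gt (D p N y) (2 * δ) with h' | h'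
    · show |G x + g x - (G y + g y)| ≤ L * dist x y
      rw [hg0 x h, hg0 y h', add_zero, add_zero]; exact hG.2 x y
    · have := key y x h' h
      rwa [abs_sub_comm, dist_comm] at this
    · exact key x y h h'
    · show |G x + g x - (G y + g y)| ≤ L * dist x y
      rw [hG0 x (by linarith), hG0 y (by linarith), zero_add, zero_add]; exact hgB.2 x y
  · show G x + g x = 0
    rw [hG0 x (hx.trans (D_anti p hNN' x)), show g x = 0 from cut_zero p hδ _ hx, add_zero]
  · show G x + g x = G x
    rw [hg0 x hx, add_zero]
  · exact (le_max_left _ _).trans hnm.le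
  · exact hN₁ m le_rfl N' ((le_max_right _ _).trans hN₂N')
  · refine le_trans (measureReal_mono ?_) (hN₃ n le_rfl N' (le_max_right _ _))
    intro x hx
    simp only [Set.mem_ofPred_eq] at hx ⊢
    linarith
  · rw [pairing_add_fun _ hG.isBL hgB.isBL, pairing_add_fun _ hG.isBL hgB.isBL]
    have h1 := hsmall m le_rfl g hgf
    have h2 := hGm n hnm.le
    rw [abs_le] at h1 h2
    rcases le_abs'.1 hgn with h3 | h3
    · rw [le_abs']; left; linarith
    · rw [le_abs']; right; linarith

lemma lemmaA {p : ℕ → S} (hp : DenseRange p) (μ : ℕ → SignedMeasure S)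
    {C : ℝ} (hC : 0 < C) (hTV : ∀ n, tvNorm (μ n) ≤ C)
    (hconv : ∀ f : S → ℝ, IsBL f → ∃ l : ℝ, Tendsto (fun n => pairing (μ n) f) atTop (𝓝 l))
    {ε : ℝ} (hε : 0 < ε) :
    ∃ N, ∀ n f, B 1 1 f → (∀ j ≤ N, f (p j) = 0) → |pairing (μ n) f| ≤ ε := by
  by_contra! hbad
  set δ := ε / (8 * C) with hδd
  have hδ : 0 < δ := by positivity
  have hδC : 2 * δ * C ≤ ε / 4 := by rw [hδd]; field_simp; norm_num
  set L := 1 + 2 / δ with hLd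
  have hL0 : 0 < 2 / δ := by positivity
  have hL1 : 1 ≤ L := by linarith
  have hL : 2 / δ ≤ L := by linarith
  have step := hump_step hp μ hC hTV hconv hε hδ hδC hL1 hL hbad
  let Q := {s : ℕ × (S → ℝ) // B 1 L s.2 ∧ ∀ x, δ ≤ D p s.1 x → s.2 x = 0}
  choose! nN hnN nG hnB hn0 hnE hnM using step
  let nxt : ℕ → Q → Q := fun k s => ⟨(nN k s.1.1 s.1.2, nG k s.1.1 s.1.2),
    hnB k _ _ s.2.1 s.2.2, hn0 k _ _ s.2.1 s.2.2⟩
  let q0 : Q := ⟨(0, fun _ => 0), ⟨fun x => by simp, fun x y => by simp; positivity⟩,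
    fun x _ => rfl⟩
  let q : ℕ → Q := fun k => Nat.rec q0 nxt k
  have hq : ∀ k, q (k + 1) = nxt k (q k) := fun k => rfl
  have hmono : Monotone (fun k => (q k).1.1) := by
    apply monotone_nat_of_le_succ
    intro k
    rw [hq]
    exact hnN k _ _ (q k).2.1 (q k).2.2
  have hcoh : ∀ k x, D p (q k).1.1 x ≤ 2 * δ → ∀ l ≥ k, (q l).1.2 x = (q k).1.2 x := by
    intro k x hx l hl
    induction l, hl using Nat.le_induction with
    | base => rfl
    | succ l hl ih =>
      rw [← ih, hq]
      exact hnE l _ _ (q l).2.1 (q l).2.2 x ((D_anti p (hmono hl) x).trans hx)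
  have hlim : ∀ x, ∃ a, ∃ k, ∀ l ≥ k, (q l).1.2 x = a := by
    intro x
    by_cases h : ∃ k, D p (q k).1.1 x ≤ 2 * δ
    · obtain ⟨k, hk⟩ := h
      exact ⟨_, k, hcoh k x hk⟩
    · push Not at h
      exact ⟨0, 0, fun l _ => (q l).2.2 x (by have := h l; linarith)⟩
  choose g hg using hlim
  have hgB : B 1 L g := by
    refine ⟨fun x => ?_, fun x y => ?_⟩
    · obtain ⟨k, hk⟩ := hg x
      rw [← hk k le_rfl]; exact (q k).2.1.1 x
    · obtain ⟨k, hk⟩ := hg x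
      obtain ⟨l, hl⟩ := hg y
      rw [← hk (max k l) (le_max_left _ _), ← hl (max k l) (le_max_right _ _)]
      exact (q _).2.1.2 x y
  have hgk : ∀ k x, D p (q k).1.1 x ≤ 2 * δ → g x = (q k).1.2 x := by
    intro k x hx
    obtain ⟨l, hl⟩ := hg x
    rw [← hl (max k l) (le_max_right _ _)]
    exact hcoh k x hx _ (le_max_left _ _)
  obtain ⟨l, hl⟩ := hconv g hgB.isBL
  obtain ⟨k, hk⟩ := Metric.tendsto_atTop.1 hl (ε / 32) (by positivity)
  obtain ⟨m, hm, n, hn, hm1, hn1, hmn⟩ := hnM k _ _ (q k).2.1 (q k).2.2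
  change (μ m).totalVariation.real {x | 2 * δ < D p (q (k+1)).1.1 x} ≤ ε / 64 at hm1
  change (μ n).totalVariation.real {x | 2 * δ < D p (q (k+1)).1.1 x} ≤ ε / 64 at hn1
  change ε / 4 ≤ |pairing (μ n) (q (k+1)).1.2 - pairing (μ m) (q (k+1)).1.2| at hmn
  have hclose : ∀ i, (μ i).totalVariation.real {x | 2 * δ < D p (q (k+1)).1.1 x} ≤ ε / 64 →
      |pairing (μ i) g - pairing (μ i) (q (k+1)).1.2| ≤ ε / 32 := by
    intro i hi
    have h1 := pairing_le (μ i) (f := fun x => g x - (q (k+1)).1.2 x) (M := 2)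
      (fun x => by
        have := abs_sub (g x) ((q (k+1)).1.2 x); have := hgB.1 x
        have := (q (k+1)).2.1.1 x; linarith)
      (A := {x | 2 * δ < D p (q (k+1)).1.1 x}) (fun x hx => by
        rw [hgk (k+1) x (by simpa using hx), sub_self])
    rw [pairing_sub_fun _ hgB.isBL (q (k+1)).2.1.isBL] at h1
    linarith
  have a1 := hclose m hm1
  have a2 := hclose n hn1
  have a3 := hk m hm
  have a4 := hk n hn
  rw [Real.dist_eq, abs_lt] at a3 a4
  rw [abs_le] at a1 a2
  rcases le_abs'.1 hmn with h | h <;> linarith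

end hump

section functional
variable {S : Type*} [MetricSpace S]

/-- A limit functional. -/
structure Fn (p : ℕ → S) (C : ℝ) (φ : (S → ℝ) → ℝ) : Prop where
  sub : ∀ f g, IsBL f → IsBL g → φ (fun x => f x - g x) = φ f - φ g
  add : ∀ f g, IsBL f → IsBL g → φ (fun x => f x + g x) = φ f + φ g
  smul : ∀ (c : ℝ) f, IsBL f → φ (fun x => c * f x) = c * φ f
  bound : ∀ M f, IsBL f → 0 ≤ M → (∀ x, |f x| ≤ M) → |φ f| ≤ M * C
  small : ∀ ε > 0, ∃ N, ∀ f, B 1 1 f → (∀ j ≤ N, f (p j) = 0) → |φ f| ≤ ε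

variable {p : ℕ → S} {C : ℝ} {φ : (S → ℝ) → ℝ}

lemma Fn.zero (h : Fn p C φ) : φ (fun _ => 0) = 0 := by
  have := h.smul 0 (fun _ => 0) (isBL_const 0)
  simpa using this

lemma Fn.sum (h : Fn p C φ) {ι : Type*} (s : Finset ι) {f : ι → S → ℝ} (hf : ∀ i ∈ s, IsBL (f i)) :
    φ (fun x => ∑ i ∈ s, f i x) = ∑ i ∈ s, φ (f i) := by
  classical
  induction s using Finset.induction_on with
  | empty => simpa using h.zero
  | insert a s ha ih =>
    simp only [Finset.sum_insert ha]
    rw [h.add _ _ (hf a (by simp)) (isBL_sum s fun i hi => hf i (by simp [hi])),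
      ih fun i hi => hf i (by simp [hi])]

lemma Fn.small' (h : Fn p C φ) {ε R : ℝ} (hε : 0 < ε) (hR : 0 < R) :
    ∃ N, ∀ f, B R R f → (∀ j ≤ N, f (p j) = 0) → |φ f| ≤ ε := by
  obtain ⟨N, hN⟩ := h.small (ε / R) (by positivity)
  refine ⟨N, fun f hf h0 => ?_⟩
  have h1 := hN (fun x => R⁻¹ * f x) (by
    have := hf.smul R⁻¹
    rwa [abs_of_pos (by positivity), inv_mul_cancel₀ hR.ne'] at this) (fun j hj => by
      rw [h0 j hj, mul_zero])
  rw [h.smul _ _ hf.isBL, abs_mul, abs_of_pos (by positivity), inv_mul_le_iff₀ hR] at h1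
  rwa [mul_div_cancel₀ _ hR.ne'] at h1

lemma Fn.tight (h : Fn p C φ) {ε δ : ℝ} (hε : 0 < ε) (hδ : 0 < δ) :
    ∃ N, ∀ f K, B 1 K f → (∀ x, D p N x ≤ δ → f x = 0) → |φ f| ≤ ε := by
  by_contra! hbad
  have hbad' : ∀ N, ∃ f K, 0 ≤ K ∧ B 1 K f ∧ (∀ x, D p N x ≤ δ → f x = 0) ∧ ε < φ f := by
    intro N
    obtain ⟨f, K, hf, h0, hφ⟩ := hbad N
    rcases lt_abs.1 hφ with h1 | h1
    · exact ⟨f, |K|, abs_nonneg _, hf.mono le_rfl (le_abs_self _), h0, h1⟩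
    · refine ⟨fun x => (-1) * f x, |K|, abs_nonneg _, ?_, fun x hx => by
        show -1 * f x = 0
        rw [h0 x hx, mul_zero], ?_⟩
      · have := hf.smul (-1)
        simp only [abs_neg, abs_one, one_mul] at this
        exact this.mono le_rfl (le_abs_self _)
      · rw [h.smul _ _ hf.isBL]; linarith
  have claim : ∀ m : ℕ, ∃ N K G, B 1 K G ∧ (∀ x, δ ≤ D p N x → G x = 0) ∧ m * (ε / 2) ≤ φ G := by
    intro m
    induction m with
    | zero =>
      refine ⟨0, 0, fun _ => 0, ⟨fun _ => by simp, fun _ _ => by simp⟩, fun _ _ => rfl, ?_⟩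
      rw [h.zero]; simp
    | succ m ih =>
      obtain ⟨N, K, G, hG, hG0, hφ⟩ := ih
      obtain ⟨f, K', hK', hf, hf0, hfφ⟩ := hbad' N
      have hd : 0 < 2 / δ := by positivity
      obtain ⟨N₁, hN₁⟩ := h.small' (half_pos hε) (R := 2 + 2 * K' + 2 / δ) (by positivity)
      set N' := max N N₁
      set g := cut p δ N' f with hg
      have hgB : B 1 (K' + 2 / δ) g := cut_lip p hδ N' hf (by linarith) (by linarith)
      have hgf : ∀ x, |g x| ≤ |f x| := cut_abs p δ N' f
      have hg0 : ∀ x, D p N x ≤ δ → g x = 0 := by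
        intro x hx
        have := hgf x
        rw [hf0 x hx, abs_zero] at this
        exact abs_nonpos_iff.1 this
      have h1 : |φ (fun x => f x - g x)| ≤ ε / 2 := by
        apply hN₁
        · exact (hf.sub hgB).mono (by linarith) (by linarith)
        · intro j hj
          have : g (p j) = f (p j) := by
            apply cut_eq p hδ (hf.1 _)
            rw [D_self p (hj.trans (le_max_right _ _))]
            positivity
          rw [this, sub_self]
      rw [h.sub _ _ hf.isBL hgB.isBL, abs_le] at h1
      refine ⟨N', K + (K' + 2 / δ), fun x => G x + g x, ⟨fun x => ?_, (hG.add hgB).2⟩,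
        fun x hx => ?_, ?_⟩
      · show |G x + g x| ≤ 1
        rcases le_or_gt (D p N x) δ with h | h
        · rw [hg0 x h, add_zero]; exact hG.1 x
        · rw [hG0 x h.le, zero_add]; exact hgB.1 x
      · show G x + g x = 0
        rw [hG0 x (hx.trans (D_anti p (le_max_left _ _) x)), show g x = 0 from cut_zero p hδ _ hx,
          add_zero]
      · rw [h.add _ _ hG.isBL hgB.isBL]
        push_cast
        linarith
  obtain ⟨m, hm⟩ := exists_nat_gt (C / (ε / 2))
  obtain ⟨N, K, G, hG, -, hφ⟩ := claim m
  have h1 := h.bound 1 G hG.isBL zero_le_one hG.1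
  rw [div_lt_iff₀ (by positivity)] at hm
  have := le_abs_self (φ G)
  linarith

end functional

section unif
variable {S : Type*} [MetricSpace S] [MeasurableSpace S] [BorelSpace S]

lemma exists_net (p : ℕ → S) (N : ℕ) {η : ℝ} (hη : 0 < η) :
    ∃ t : Set (S → ℝ), t.Finite ∧ (∀ f ∈ t, B 1 1 f) ∧
      ∀ f, B 1 1 f → ∃ g ∈ t, ∀ j ≤ N, |f (p j) - g (p j)| ≤ η := by
  let R : (S → ℝ) → (Fin (N + 1) → ℝ) := fun f j => f (p j)
  have hb : TotallyBounded (R '' {f | B 1 1 f}) := by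
    apply TotallyBounded.subset _ (isCompact_univ_pi (fun _ : Fin (N + 1) =>
      isCompact_Icc (a := (-1 : ℝ)) (b := 1))).totallyBounded
    rintro _ ⟨f, hf, rfl⟩ j _
    exact abs_le.1 (hf.1 (p j))
  obtain ⟨t, ht, htf, hcov⟩ := Metric.finite_approx_of_totallyBounded hb η hη
  have ht' : ∀ y ∈ t, ∃ f, B 1 1 f ∧ R f = y := fun y hy => ht hy
  choose! F hF hRF using ht'
  refine ⟨F '' t, htf.image F, ?_, fun f hf => ?_⟩
  · rintro _ ⟨y, hy, rfl⟩
    exact hF y hy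
  · have := hcov ⟨f, hf, rfl⟩
    simp only [Set.mem_iUnion, exists_prop] at this
    obtain ⟨y, hy, hd⟩ := this
    refine ⟨F y, ⟨y, hy, rfl⟩, fun j hj => ?_⟩
    have h1 := dist_le_pi_dist (R f) y ⟨j, by omega⟩
    rw [Metric.mem_ball] at hd
    rw [← hRF y hy, Real.dist_eq] at h1
    rw [← hRF y hy] at hd
    exact h1.trans hd.le

lemma fn_of_limit {p : ℕ → S} (hp : DenseRange p) (μ : ℕ → SignedMeasure S)
    {C : ℝ} (hC : 0 < C) (hTV : ∀ n, tvNorm (μ n) ≤ C) (φ : (S → ℝ) → ℝ)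
    (hφ : ∀ f : S → ℝ, IsBL f → Tendsto (fun n => pairing (μ n) f) atTop (𝓝 (φ f))) :
    Fn p C φ where
  sub f g hf hg := by
    refine tendsto_nhds_unique (hφ _ (isBL_sub hf hg)) ?_
    simp only [pairing_sub_fun _ hf hg]
    exact (hφ f hf).sub (hφ g hg)
  add f g hf hg := by
    refine tendsto_nhds_unique (hφ _ (isBL_add hf hg)) ?_
    simp only [pairing_add_fun _ hf hg]
    exact (hφ f hf).add (hφ g hg)
  smul c f hf := by
    refine tendsto_nhds_unique (hφ _ (isBL_smul c hf)) ?_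
    simp only [pairing_smul_fun]
    exact (hφ f hf).const_mul c
  bound M f hf hM h := le_of_tendsto (hφ f hf).abs
    (Eventually.of_forall fun n => pairing_le_C (μ n) (hTV n) hM h)
  small ε hε := by
    obtain ⟨N, hN⟩ := lemmaA hp μ hC hTV (fun f hf => ⟨_, hφ f hf⟩) hε
    exact ⟨N, fun f hf h0 => le_of_tendsto (hφ f hf.isBL).abs
      (Eventually.of_forall fun n => hN n f hf h0)⟩

lemma unif {p : ℕ → S} (hp : DenseRange p) (μ : ℕ → SignedMeasure S)
    {C : ℝ} (hC : 0 < C) (hTV : ∀ n, tvNorm (μ n) ≤ C) (φ : (S → ℝ) → ℝ)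
    (hφ : ∀ f : S → ℝ, IsBL f → Tendsto (fun n => pairing (μ n) f) atTop (𝓝 (φ f)))
    {ε : ℝ} (hε : 0 < ε) :
    ∃ n₀, ∀ n ≥ n₀, ∀ f, B 1 1 f → |pairing (μ n) f - φ f| ≤ ε := by
  have hF := fn_of_limit hp μ hC hTV φ hφ
  obtain ⟨N, hN⟩ := lemmaA hp μ hC hTV (fun f hf => ⟨_, hφ f hf⟩) (by positivity : 0 < ε / 16)
  have hNφ : ∀ f, B 1 1 f → (∀ j ≤ N, f (p j) = 0) → |φ f| ≤ ε / 16 :=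
    fun f hf h0 => le_of_tendsto (hφ f hf.isBL).abs
      (Eventually.of_forall fun n => hN n f hf h0)
  set η := ε / (8 * C) with hη
  have hη0 : 0 < η := by positivity
  have hηC : η * C = ε / 8 := by rw [hη]; field_simp
  obtain ⟨t, ht, htB, hcov⟩ := exists_net p N hη0
  have hev : ∀ᶠ n in atTop, ∀ g ∈ t, |pairing (μ n) g - φ g| ≤ ε / 2 := by
    rw [ht.eventually_all]
    intro g hg
    have := Metric.tendsto_nhds.1 (hφ g (htB g hg).isBL) (ε / 2) (by positivity)
    filter_upwards [this] with n hn
    exact hn.le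
  obtain ⟨n₀, hn₀⟩ := eventually_atTop.1 hev
  refine ⟨n₀, fun n hn f hf => ?_⟩
  obtain ⟨g, hg, hfg⟩ := hcov f hf
  have h1 := hn₀ n hn g hg
  have hgB := htB g hg
  have hrB : B 2 2 (fun x => f x - g x) := (hf.sub hgB).mono (by norm_num) (by norm_num)
  have hsB := hrB.sth hη0.le
  set s := sth η (fun x => f x - g x) with hs
  have hs0 : ∀ j ≤ N, s (p j) = 0 := fun j hj => sth_zero _ (hfg j hj)
  have hhB : B 1 1 (fun x => (1 / 2) * s x) := by
    have := hsB.smul (1 / 2)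
    rw [abs_of_pos (by norm_num)] at this
    exact this.mono (by norm_num) (by norm_num)
  have hh0 : ∀ j ≤ N, (fun x => (1 / 2) * s x) (p j) = 0 := fun j hj => by
    show 1 / 2 * s (p j) = 0
    rw [hs0 j hj, mul_zero]
  have a1 := hN n _ hhB hh0
  have a2 := hNφ _ hhB hh0
  rw [pairing_smul_fun] at a1
  rw [hF.smul _ _ hsB.isBL] at a2
  have hdB := hrB.sub hsB
  have hd : ∀ x, |(f x - g x) - s x| ≤ η := fun x => sth_sub (f := fun x => f x - g x) hη0.le x
  have a3 := pairing_le_C (μ n) (hTV n) hη0.le hd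
  have a4 := hF.bound η _ hdB.isBL hη0.le hd
  rw [pairing_sub_fun _ hrB.isBL hsB.isBL, pairing_sub_fun _ hf.isBL hgB.isBL] at a3
  rw [hF.sub _ _ hrB.isBL hsB.isBL, hF.sub _ _ hf.isBL hgB.isBL] at a4
  rw [abs_le] at *
  constructor <;> linarith

end unif

section repr
variable {S : Type*} [MetricSpace S]

/-- bumps -/
noncomputable def vv (p : ℕ → S) (r : ℝ) (i : ℕ) (x : S) : ℝ :=
  max 0 (min 1 (2 - dist x (p i) / r))

/-- partial maxima of bumps -/
noncomputable def ww (p : ℕ → S) (r : ℝ) : ℕ → S → ℝ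
  | 0 => fun _ => 0
  | i + 1 => fun x => max (ww p r i x) (vv p r i x)

/-- the partition -/
noncomputable def uu (p : ℕ → S) (r : ℝ) (i : ℕ) (x : S) : ℝ :=
  ww p r (i + 1) x - ww p r i x

variable {p : ℕ → S} {r : ℝ}

lemma vv_le (i : ℕ) (x : S) : vv p r i x ≤ 1 := max_le zero_le_one (min_le_left _ _)

lemma vv_isBL (hr : 0 < r) (i : ℕ) : IsBL (vv p r i) := by
  refine B.isBL (C := 1) (K := 1 / r) ⟨fun x => ?_, fun x y => ?_⟩
  · rw [abs_of_nonneg (le_max_left _ _)]; exact vv_le i x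
  · have h0 : 0 ≤ 1 / r * dist x y := by positivity
    unfold vv
    apply abs_max_sub_max_le' _ _ _ _ _ (by simpa using h0)
    apply abs_min_sub_min_le' _ _ _ _ _ (by simpa using h0)
    have : 2 - dist x (p i) / r - (2 - dist y (p i) / r)
      = (1 / r) * (dist y (p i) - dist x (p i)) := by ring
    rw [this, abs_mul, abs_of_pos (by positivity : 0 < 1 / r)]
    gcongr
    rw [abs_sub_comm]
    exact abs_dist_sub_le x y (p i)

lemma ww_isBL (hr : 0 < r) (i : ℕ) : IsBL (ww p r i) := by
  induction i with
  | zero => exact isBL_const 0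
  | succ i ih => exact isBL_max ih (vv_isBL hr i)

lemma uu_isBL (hr : 0 < r) (i : ℕ) : IsBL (uu p r i) := isBL_sub (ww_isBL hr _) (ww_isBL hr _)

lemma ww_nonneg (i : ℕ) (x : S) : 0 ≤ ww p r i x := by
  induction i with
  | zero => exact le_rfl
  | succ i ih => exact le_max_of_le_left ih

lemma ww_le (i : ℕ) (x : S) : ww p r i x ≤ 1 := by
  induction i with
  | zero => exact zero_le_one
  | succ i ih => exact max_le ih (vv_le i x)

lemma uu_nonneg (i : ℕ) (x : S) : 0 ≤ uu p r i x := sub_nonneg.2 (le_max_left _ _)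

lemma uu_sum (n : ℕ) (x : S) : ∑ i ∈ Finset.range n, uu p r i x = ww p r n x := by
  unfold uu
  rw [Finset.sum_range_sub (fun i => ww p r i x)]
  simp [ww]

lemma uu_supp (hr : 0 < r) (i : ℕ) (x : S) (h : uu p r i x ≠ 0) : dist x (p i) < 2 * r := by
  by_contra! hc
  apply h
  have : vv p r i x = 0 := by
    apply max_eq_left
    apply min_le_of_right_le
    have : 2 ≤ dist x (p i) / r := by rwa [le_div_iff₀ hr]
    linarith
  unfold uu
  show max (ww p r i x) (vv p r i x) - _ = 0
  rw [this, max_eq_left (ww_nonneg i x), sub_self]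

lemma ww_mono {i j : ℕ} (h : i ≤ j) (x : S) : ww p r i x ≤ ww p r j x :=
  monotone_nat_of_le_succ (f := fun i => ww p r i x) (fun _ => le_max_left _ _) h

lemma ww_one (hr : 0 < r) {N : ℕ} {x : S} (h : D p N x < r) : ww p r (N + 1) x = 1 := by
  apply le_antisymm (ww_le _ _)
  obtain ⟨j, hj, hd⟩ := (D_lt p).1 h
  refine le_trans ?_ (ww_mono (Nat.succ_le_succ hj) x)
  apply le_max_of_le_right
  apply le_max_of_le_right
  apply le_min le_rfl
  have : dist x (p j) / r ≤ 1 := by rw [div_le_iff₀ hr]; linarith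
  linarith

lemma uu_comb {M : ℝ} {s : Finset ℕ} {n : ℕ} (hs : s ⊆ Finset.range n) {c : ℕ → ℝ}
    (hM : 0 ≤ M) (hc : ∀ i ∈ s, |c i| ≤ M) (x : S) : |∑ i ∈ s, c i * uu p r i x| ≤ M := by
  calc |∑ i ∈ s, c i * uu p r i x| ≤ ∑ i ∈ s, M * uu p r i x := by
        refine (Finset.abs_sum_le_sum_abs _ _).trans (Finset.sum_le_sum fun i hi => ?_)
        rw [abs_mul, abs_of_nonneg (uu_nonneg i x)]
        exact mul_le_mul_of_nonneg_right (hc i hi) (uu_nonneg i x)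
    _ ≤ ∑ i ∈ Finset.range n, M * uu p r i x :=
        Finset.sum_le_sum_of_subset_of_nonneg hs fun i _ _ => mul_nonneg hM (uu_nonneg i x)
    _ = M * ww p r n x := by rw [← Finset.mul_sum, uu_sum]
    _ ≤ M := mul_le_of_le_one_right hM (ww_le _ _)

variable {C : ℝ} {φ : (S → ℝ) → ℝ}

lemma Fn.comb (h : Fn p C φ) (hr : 0 < r) (s : Finset ℕ) (c : ℕ → ℝ) :
    φ (fun x => ∑ i ∈ s, c i * uu p r i x) = ∑ i ∈ s, c i * φ (uu p r i) := by
  rw [h.sum s (f := fun i x => c i * uu p r i x) (fun i _ => isBL_smul _ (uu_isBL hr i))]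
  exact Finset.sum_congr rfl fun i _ => h.smul _ _ (uu_isBL hr i)

lemma isBL_comb (hr : 0 < r) (s : Finset ℕ) (c : ℕ → ℝ) :
    IsBL (fun x => ∑ i ∈ s, c i * uu p r i x) :=
  isBL_sum s (f := fun i x => c i * uu p r i x) (fun i _ => isBL_smul _ (uu_isBL hr i))

lemma abs_eq_sign_mul (a : ℝ) : |a| = (SignType.sign a : ℝ) * a := (sign_mul_self a).symm

lemma abs_sign_le (a : ℝ) : |((SignType.sign a : SignType) : ℝ)| ≤ 1 := by
  rcases lt_trichotomy a 0 with h | h | h <;> simp [h]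

lemma Fn.mass (h : Fn p C φ) (hr : 0 < r) (n : ℕ) :
    ∑ i ∈ Finset.range n, |φ (uu p r i)| ≤ C := by
  simp_rw [abs_eq_sign_mul]
  rw [← h.comb hr]
  refine (le_abs_self _).trans ((h.bound 1 _ (isBL_comb hr _ _) zero_le_one ?_).trans (by simp))
  exact uu_comb subset_rfl zero_le_one fun i _ => abs_sign_le _

/-- Approximation at scale `r`. -/
lemma Fn.approx (h : Fn p C φ) (hr : 0 < r) {N : ℕ}
    (hN : ∀ f K, B 1 K f → (∀ x, D p N x ≤ r / 2 → f x = 0) → |φ f| ≤ r)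
    {f : S → ℝ} {M K : ℝ} (hM : 0 < M) (hK : 0 ≤ K) (hf : B M K f) :
    |φ f - ∑ i ∈ Finset.range (N + 1), f (p i) * φ (uu p r i)| ≤ 2 * r * K * C + 2 * M * r := by
  rw [← h.comb hr]
  set F : S → ℝ := fun x => ∑ i ∈ Finset.range (N + 1), f (p i) * uu p r i x with hF
  have hFB : IsBL F := isBL_comb hr _ _
  have hFM : ∀ x, |F x| ≤ M := uu_comb subset_rfl hM.le fun i _ => hf.1 _
  rw [← h.sub _ _ hf.isBL hFB]
  obtain ⟨C', K', hC', hK', hg⟩ := exists_B (isBL_sub hf.isBL hFB)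
  have hg2 : B (2 * M) K' (fun x => f x - F x) := ⟨fun x => by
    have := abs_sub (f x) (F x); have := hf.1 x; have := hFM x; linarith, hg.2⟩
  have hη : 0 ≤ 2 * r * K := by positivity
  have hs := hg2.sth hη
  set s := sth (2 * r * K) (fun x => f x - F x) with hsd
  have hd : ∀ x, |(f x - F x) - s x| ≤ 2 * r * K :=
    fun x => sth_sub (f := fun x => f x - F x) hη x
  have a1 := h.bound _ _ (hg2.sub hs).isBL hη hd
  rw [h.sub _ _ hg2.isBL hs.isBL] at a1
  have a2 : |φ s| ≤ 2 * M * r := by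
    have hb := hs.smul (2 * M)⁻¹
    rw [abs_of_pos (by positivity), inv_mul_cancel₀ (by positivity)] at hb
    have := hN _ _ hb (fun x hx => by
      have hs0 : s x = 0 := by
        apply sth_zero
        have h1 : f x - F x = ∑ i ∈ Finset.range (N + 1), (f x - f (p i)) * uu p r i x := by
          simp_rw [sub_mul]
          rw [Finset.sum_sub_distrib, ← Finset.mul_sum, uu_sum, ww_one hr (by linarith), mul_one]
        rw [h1]
        calc |∑ i ∈ Finset.range (N + 1), (f x - f (p i)) * uu p r i x|
            ≤ ∑ i ∈ Finset.range (N + 1), (2 * r * K) * uu p r i x := by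
              refine (Finset.abs_sum_le_sum_abs _ _).trans (Finset.sum_le_sum fun i hi => ?_)
              rw [abs_mul, abs_of_nonneg (uu_nonneg i x)]
              by_cases h0 : uu p r i x = 0
              · rw [h0, mul_zero, mul_zero]
              · have h3 := uu_supp hr i x h0
                refine mul_le_mul_of_nonneg_right ((hf.2 _ _).trans ?_) (uu_nonneg i x)
                nlinarith
          _ = (2 * r * K) * ww p r (N + 1) x := by rw [← Finset.mul_sum, uu_sum]
          _ ≤ 2 * r * K := mul_le_of_le_one_right hη (ww_le _ _)
      rw [hs0, mul_zero])
    rw [h.smul _ _ hs.isBL, abs_mul, abs_of_pos (by positivity), inv_mul_le_iff₀ (by positivity)]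
      at this
    exact this
  rw [abs_le] at *
  constructor <;> linarith

lemma Fn.tail (h : Fn p C φ) {rs : ℕ → ℝ} (hrs : ∀ k, 0 < rs k) (hlim : Tendsto rs atTop (𝓝 0))
    (Ns : ℕ → ℕ) {ε δ : ℝ} (hε : 0 < ε) (hδ : 0 < δ) :
    ∃ N, ∀ k, ∑ i ∈ Finset.range (Ns k + 1) with δ < D p N (p i), |φ (uu p (rs k) i)| ≤ ε := by
  obtain ⟨N, hN⟩ := h.tight hε (half_pos hδ)
  obtain ⟨k₀, hk₀⟩ := eventually_atTop.1 (hlim.eventually_lt_const (by positivity : 0 < δ / 4))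
  refine ⟨max N ((Finset.range k₀).sup Ns), fun k => ?_⟩
  set N' := max N ((Finset.range k₀).sup Ns)
  rcases lt_or_ge k k₀ with hk | hk
  · rw [Finset.filter_false_of_mem]
    · simpa using hε.le
    · intro i hi
      rw [D_self]
      · linarith
      · have : Ns k ≤ (Finset.range k₀).sup Ns := Finset.le_sup (f := Ns) (by simpa using hk)
        have := Finset.mem_range.1 hi
        have := le_max_right N ((Finset.range k₀).sup Ns)
        omega
  · have hr := hrs k
    simp_rw [abs_eq_sign_mul]
    rw [← h.comb hr]
    refine (le_abs_self _).trans ?_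
    obtain ⟨C', K', -, -, hB⟩ := exists_B (isBL_comb (p := p) hr
      (Finset.filter (fun i => δ < D p N' (p i)) (Finset.range (Ns k + 1)))
      (fun i => (SignType.sign (φ (uu p (rs k) i)) : ℝ)))
    refine hN _ K' ⟨?_, hB.2⟩ ?_
    · exact uu_comb (Finset.filter_subset _ _) zero_le_one fun i _ => abs_sign_le _
    · intro x hx
      apply Finset.sum_eq_zero
      intro i hi
      by_contra hne
      have h3 := uu_supp hr i x (right_ne_zero_of_mul hne)
      have h4 := (Finset.mem_filter.1 hi).2
      have h5 := D_lip p N (p i) x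
      have h6 := D_anti p (le_max_left N ((Finset.range k₀).sup Ns)) (p i)
      have h7 := hk₀ k hk
      rw [dist_comm, abs_le] at h5
      change δ < D p (max N ((Finset.range k₀).sup Ns)) (p i) at h4
      linarith

end repr

section final
variable {S : Type*} [MetricSpace S] [MeasurableSpace S] [BorelSpace S]

/-- discrete measure -/
noncomputable def dm (p : ℕ → S) (s : Finset ℕ) (a : ℕ → ℝ) : Measure S :=
  ∑ i ∈ s, ENNReal.ofReal (a i) • Measure.dirac (p i)

lemma dm_apply_le (p : ℕ → S) (s : Finset ℕ) (a : ℕ → ℝ) {A : Set S} (hA : MeasurableSet A)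
    [DecidablePred fun i => p i ∈ A] :
    dm p s a A ≤ ENNReal.ofReal (∑ i ∈ s with p i ∈ A, |a i|) := by
  unfold dm
  rw [Measure.finsetSum_apply, ENNReal.ofReal_sum_of_nonneg (fun _ _ => abs_nonneg _),
    Finset.sum_filter]
  refine Finset.sum_le_sum fun i _ => ?_
  rw [Measure.smul_apply, Measure.dirac_apply' _ hA]
  by_cases h : p i ∈ A
  · simp only [h, Set.indicator_of_mem, Pi.one_apply, smul_eq_mul, mul_one, if_true]
    exact ENNReal.ofReal_le_ofReal (le_abs_self _)
  · simp [h]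

instance (p : ℕ → S) (s : Finset ℕ) (a : ℕ → ℝ) : IsFiniteMeasure (dm p s a) := by
  classical
  exact ⟨lt_of_le_of_lt (dm_apply_le p s a MeasurableSet.univ) ENNReal.ofReal_lt_top⟩

noncomputable def fdm (p : ℕ → S) (s : Finset ℕ) (a : ℕ → ℝ) : FiniteMeasure S :=
  ⟨dm p s a, inferInstance⟩

lemma fdm_coe (p : ℕ → S) (s : Finset ℕ) (a : ℕ → ℝ) :
    (fdm p s a : Measure S) = dm p s a := rfl

lemma dm_integral (p : ℕ → S) (s : Finset ℕ) (a : ℕ → ℝ) {f : S → ℝ} (hf : IsBL f) :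
    ∫ x, f x ∂(dm p s a) = ∑ i ∈ s, max (a i) 0 * f (p i) := by
  unfold dm
  rw [integral_finsetSum_measure]
  · refine Finset.sum_congr rfl fun i _ => ?_
    rw [integral_smul_measure, integral_dirac' _ _
      hf.2.choose_spec.continuous.measurable.stronglyMeasurable,
      ENNReal.toReal_ofReal', smul_eq_mul]
  · intro i _
    exact (isBL_integrable hf _).smul_measure ENNReal.ofReal_ne_top

lemma compact_dm [CompleteSpace S] {p : ℕ → S} {C : ℝ} (s : ℕ → Finset ℕ) (b : ℕ → ℕ → ℝ)
    (hmass : ∀ k, ∑ i ∈ s k, |b k i| ≤ C)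
    (htail : ∀ ε > 0, ∀ δ > 0, ∃ N, ∀ k, ∑ i ∈ s k with δ < D p N (p i), |b k i| ≤ ε) :
    ∃ 𝒦 : Set (FiniteMeasure S), IsCompact 𝒦 ∧
      ∀ k, fdm p (s k) (b k) ∈ 𝒦 := by
  classical
  have key : ∀ n : ℕ, ∃ K : Set S, IsCompact K ∧
      ∀ k, dm p (s k) (b k) Kᶜ ≤ ENNReal.ofReal (1 / (n + 1)) := by
    intro n
    have hn : (0 : ℝ) < 1 / (n + 1) := by positivity
    obtain ⟨e, he, hsum⟩ := ENNReal.exists_pos_sum_of_countable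
      (ε := ENNReal.ofReal (1 / (n + 1))) (by simpa using hn) ℕ
    choose N hN using fun j : ℕ => htail (e j) (by exact_mod_cast he j) (1 / ((j : ℝ) + 1))
      (by positivity)
    refine ⟨⋂ j : ℕ, {x | D p (N j) x ≤ 1 / ((j : ℝ) + 1)}, ?_, fun k => ?_⟩
    · apply TotallyBounded.isCompact_of_isClosed
      · rw [Metric.totallyBounded_iff]
        intro ε hε
        obtain ⟨j, hj⟩ := exists_nat_one_div_lt hε
        refine ⟨p '' Set.Iic (N j), (Set.finite_Iic _).image p, fun x hx => ?_⟩
        have hx := Set.mem_iInter.1 hx j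
        obtain ⟨i, hi, hd⟩ := (D_lt p).1 (lt_of_le_of_lt hx hj)
        simp only [Set.mem_iUnion]
        exact ⟨p i, ⟨i, hi, rfl⟩, hd⟩
      · exact isClosed_iInter fun j => isClosed_le (D_cont p _) continuous_const
    · rw [Set.compl_iInter]
      refine (measure_iUnion_le _).trans (le_trans (ENNReal.tsum_le_tsum fun j => ?_) hsum.le)
      have hm : MeasurableSet {x | D p (N j) x ≤ 1 / ((j : ℝ) + 1)}ᶜ :=
        (isClosed_le (D_cont p _) continuous_const).measurableSet.compl
      refine (dm_apply_le p (s k) (b k) hm).trans ?_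
      have h1 := hN j k
      rw [← ENNReal.ofReal_coe_nnreal]
      apply ENNReal.ofReal_le_ofReal
      refine le_trans (le_of_eq ?_) h1
      refine Finset.sum_congr ?_ fun _ _ => rfl
      ext i
      simp
  choose K hK hKm using key
  have hu : Tendsto (fun n : ℕ => Real.toNNReal (1 / (n + 1))) atTop (𝓝 0) := by
    have := (continuous_real_toNNReal.tendsto 0).comp tendsto_one_div_add_atTop_nhds_zero_nat
    rw [Real.toNNReal_zero] at this
    exact this
  refine ⟨_, isCompact_setOfPred_finiteMeasure_mass_le_compl_isCompact_le C.toNNReal hu hK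
    (Or.inl inferInstance), fun k => ⟨?_, fun n => ?_⟩⟩
  · rw [← ENNReal.coe_le_coe, FiniteMeasure.ennreal_mass, fdm_coe]
    refine (dm_apply_le p (s k) (b k) MeasurableSet.univ).trans ?_
    apply ENNReal.ofReal_le_ofReal
    simpa using hmass k
  · rw [← ENNReal.coe_le_coe, FiniteMeasure.ennreal_coeFn_eq_coeFn_toMeasure, fdm_coe]
    exact hKm n k

lemma representation [CompleteSpace S] {p : ℕ → S} {C : ℝ} {φ : (S → ℝ) → ℝ} (h : Fn p C φ) :
    ∃ α β : FiniteMeasure S, ∀ f, IsBL f →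
      φ f = ∫ x, f x ∂(α : Measure S) - ∫ x, f x ∂(β : Measure S) := by
  let rs : ℕ → ℝ := fun k => 1 / ((k : ℝ) + 1)
  have hrs : ∀ k, 0 < rs k := fun k => by positivity
  have hlim : Tendsto rs atTop (𝓝 0) := tendsto_one_div_add_atTop_nhds_zero_nat
  choose Ns hNs using fun k => h.tight (hrs k) (half_pos (hrs k))
  let s : ℕ → Finset ℕ := fun k => Finset.range (Ns k + 1)
  let a : ℕ → ℕ → ℝ := fun k i => φ (uu p (rs k) i)
  obtain ⟨𝒦₁, hc₁, hm₁⟩ := compact_dm (p := p) (C := C) s a (fun k => h.mass (hrs k) _)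
    (fun ε hε δ hδ => h.tail hrs hlim Ns hε hδ)
  obtain ⟨𝒦₂, hc₂, hm₂⟩ := compact_dm (p := p) (C := C) s (fun k i => - a k i)
    (fun k => by simp only [abs_neg]; exact h.mass (hrs k) _)
    (fun ε hε δ hδ => by simp only [abs_neg]; exact h.tail hrs hlim Ns hε hδ)
  let U : Ultrafilter ℕ := hyperfilter ℕ
  have hU : (U : Filter ℕ) ≤ atTop := Nat.hyperfilter_le_atTop
  obtain ⟨α, -, hα⟩ := hc₁.ultrafilter_le_nhds (U.map fun k =>
    fdm p (s k) (a k))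
    (le_principal_iff.2 (Filter.mem_map.2 (Filter.univ_mem' hm₁)))
  obtain ⟨β, -, hβ⟩ := hc₂.ultrafilter_le_nhds (U.map fun k =>
    fdm p (s k) (fun i => - a k i))
    (le_principal_iff.2 (Filter.mem_map.2 (Filter.univ_mem' hm₂)))
  refine ⟨α, β, fun f hf => ?_⟩
  obtain ⟨M, K, hM, hK, hB⟩ := exists_B hf
  have hB' : B (M + 1) K f := hB.mono (by linarith) le_rfl
  let F : BoundedContinuousFunction S ℝ := BoundedContinuousFunction.ofNormedAddCommGroup f
    hB.cont M hB.1
  have t1 := (FiniteMeasure.tendsto_iff_forall_integral_tendsto.1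
    (show Tendsto _ (U : Filter ℕ) (𝓝 α) from hα)) F
  have t2 := (FiniteMeasure.tendsto_iff_forall_integral_tendsto.1
    (show Tendsto _ (U : Filter ℕ) (𝓝 β) from hβ)) F
  have t3 := t1.sub t2
  have t4 : Tendsto (fun k => ∑ i ∈ s k, f (p i) * a k i) atTop (𝓝 (φ f)) := by
    rw [tendsto_iff_dist_tendsto_zero]
    have h0 : Tendsto (fun k => 2 * rs k * K * C + 2 * (M + 1) * rs k) atTop (𝓝 0) := by
      have := (hlim.const_mul (2 * K * C + 2 * (M + 1)))
      rw [mul_zero] at this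
      refine this.congr fun k => by ring
    refine squeeze_zero (fun _ => dist_nonneg) (fun k => ?_) h0
    rw [dist_comm, Real.dist_eq]
    exact h.approx (hrs k) (hNs k) (by linarith) hK hB'
  refine tendsto_nhds_unique (t4.mono_left hU) (t3.congr fun k => ?_)
  show ∫ x, f x ∂(dm p (s k) (a k)) - ∫ x, f x ∂(dm p (s k) (fun i => - a k i)) = _
  rw [dm_integral _ _ _ hf, dm_integral _ _ _ hf, ← Finset.sum_sub_distrib]
  refine Finset.sum_congr rfl fun i _ => ?_
  rw [← sub_mul, mul_comm]
  congr 1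
  rcases le_total (a k i) 0 with h | h
  · rw [max_eq_right h, max_eq_left (by linarith)]; ring
  · rw [max_eq_left h, max_eq_right (by linarith)]; ring

end final

end SchurBL

/-- **Schur-like property for measures.** If a sequence of finite signed Borel measures on a
complete separable metric space is bounded in total variation norm and `⟨μ_n, f⟩` converges for
every bounded Lipschitz `f`, then `μ_n` converges to some `μ` in dual bounded Lipschitz norm. -/
theorem schur_like_property {S : Type*} [MetricSpace S] [CompleteSpace S]
    [TopologicalSpace.SeparableSpace S] [MeasurableSpace S] [BorelSpace S]
    (μ : ℕ → SignedMeasure S)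
    (hTV : ∃ C : ℝ, ∀ n, tvNorm (μ n) ≤ C)
    (hconv : ∀ f : S → ℝ, IsBL f →
      ∃ l : ℝ, Tendsto (fun n => pairing (μ n) f) atTop (𝓝 l)) :
    ∃ ν : SignedMeasure S, Tendsto (fun n => blDualNorm (μ n - ν)) atTop (𝓝 0) := by
  classical
  rcases isEmpty_or_nonempty S with hS | hS
  · refine ⟨0, ?_⟩
    have h0 : ∀ s : SignedMeasure S, blDualNorm s = 0 := by
      intro s
      have hp : ∀ f, pairing s f = 0 := by
        intro f
        unfold pairing
        rw [Measure.eq_zero_of_isEmpty s.toJordanDecomposition.posPart,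
          Measure.eq_zero_of_isEmpty s.toJordanDecomposition.negPart]
        simp
      unfold blDualNorm
      apply le_antisymm
      · apply Real.sSup_le _ le_rfl
        rintro r ⟨f, C, K, -, -, -, rfl⟩
        simp [hp]
      · apply Real.sSup_nonneg
        rintro r ⟨f, C, K, -, -, -, rfl⟩
        exact abs_nonneg _
    simp only [h0]
    exact tendsto_const_nhds
  obtain ⟨p, hp⟩ := TopologicalSpace.exists_dense_seq S
  obtain ⟨C₀, hC₀⟩ := hTV
  have hC : 0 < max C₀ 1 := lt_max_of_lt_right one_pos
  have hTV : ∀ n, tvNorm (μ n) ≤ max C₀ 1 := fun n => (hC₀ n).trans (le_max_left _ _)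
  choose! φ hφ using hconv
  obtain ⟨α, β, hαβ⟩ := SchurBL.representation (SchurBL.fn_of_limit hp μ hC hTV φ hφ)
  refine ⟨(α : Measure S).toSignedMeasure - (β : Measure S).toSignedMeasure, ?_⟩
  rw [Metric.tendsto_atTop]
  intro ε hε
  obtain ⟨n₀, hn₀⟩ := SchurBL.unif hp μ hC hTV φ hφ (half_pos hε)
  refine ⟨n₀, fun n hn => ?_⟩
  rw [Real.dist_eq, sub_zero, abs_of_nonneg]
  · refine lt_of_le_of_lt (Real.sSup_le ?_ (half_pos hε).le) (half_lt_self hε)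
    rintro r ⟨f, C, K, hfC, hfK, hCK, rfl⟩
    have hC0 : 0 ≤ C := (abs_nonneg _).trans (hfC (Classical.arbitrary S))
    have hf : IsBL f := ⟨⟨C, hfC⟩, K, hfK⟩
    have hB : SchurBL.B 1 1 f := by
      refine SchurBL.B.mono (C := C) (K := K) ⟨hfC, fun x y => ?_⟩ ?_ ?_
      · have := hfK.dist_le_mul x y
        rwa [Real.dist_eq] at this
      · have := K.2
        change 0 ≤ (K : ℝ) at this
        linarith
      · linarith
    rw [SchurBL.pairing_sub_meas _ _ hf, SchurBL.pairing_eq _ _ _ rfl hf, ← hαβ f hf]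
    exact hn₀ n hn f hB
  · apply Real.sSup_nonneg
    rintro r ⟨f, C, K, -, -, -, rfl⟩
    exact abs_nonneg _
end

section
/- Let (S,d) be a complete separable metric space and let (μ_n) be a sequence of finite positive Borel measures on S such that for every f ∈ BL(S) the sequence ∫_S f dμ_n converges in ℝ. Then ∫_S f dμ_n converges for every bounded continuous function f : S → ℝ, and there exists a finite positive Borel measure μ on S such that ‖μ_n − μ‖*_BL → 0 as n → ∞. -/
open MeasureTheory Filter Topology

open scoped NNReal ENNReal BoundedContinuousFunction

/-- The compact set of `K`-Lipschitz functions with values in `[-1,1]`, pointwise topology. -/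
def blSet (S : Type*) [PseudoMetricSpace S] (K : ℝ≥0) : Set (S → ℝ) :=
  {f | (∀ x, |f x| ≤ 1) ∧ ∀ x y, |f x - f y| ≤ K * dist x y}

lemma blSet_compact (S : Type*) [PseudoMetricSpace S] (K : ℝ≥0) : IsCompact (blSet S K) := by
  have h1 : IsCompact (Set.pi Set.univ (fun _ : S => Set.Icc (-1 : ℝ) 1)) :=
    isCompact_univ_pi (fun _ => isCompact_Icc)
  refine h1.of_isClosed_subset ?_ ?_
  · have : blSet S K = (⋂ x, {f : S → ℝ | |f x| ≤ 1}) ∩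
        ⋂ x, ⋂ y, {f : S → ℝ | |f x - f y| ≤ K * dist x y} := by
      ext f; simp [blSet]
    rw [this]
    refine IsClosed.inter (isClosed_iInter fun x => ?_)
      (isClosed_iInter fun x => isClosed_iInter fun y => ?_)
    · exact isClosed_le (by fun_prop) (by fun_prop)
    · exact isClosed_le (by fun_prop) (by fun_prop)
  · intro f hf x _
    exact abs_le.1 (hf.1 x)

lemma blSet_lip {S : Type*} [PseudoMetricSpace S] {K : ℝ≥0} {f : S → ℝ} (hf : f ∈ blSet S K) :
    LipschitzWith K f := LipschitzWith.of_dist_le_mul (fun x y => hf.2 x y)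

lemma blSet_integrable {S : Type*} [PseudoMetricSpace S] [MeasurableSpace S] [BorelSpace S]
    {K : ℝ≥0} {f : S → ℝ} (hf : f ∈ blSet S K) (P : Measure S) [IsFiniteMeasure P] :
    Integrable f P :=
  Integrable.of_bound (blSet_lip hf).continuous.measurable.aestronglyMeasurable 1
    (Eventually.of_forall hf.1)

/-- Uniform near-concentration on thickenings of finite sets. -/
def UT {S ι : Type*} [PseudoMetricSpace S] [MeasurableSpace S] (P : ι → Measure S) : Prop :=
  ∀ ε > 0, ∀ δ > 0, ∃ F : Set S, F.Finite ∧ ∀ i, (P i).real (Metric.thickening δ F)ᶜ ≤ ε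

lemma UT_single {S : Type*} [MetricSpace S] [CompleteSpace S]
    [TopologicalSpace.SeparableSpace S] [MeasurableSpace S] [BorelSpace S]
    (P : Measure S) [IsFiniteMeasure P] : UT (fun _ : Unit => P) := by
  intro ε hε δ hδ
  have : SecondCountableTopology S := UniformSpace.secondCountable_of_separable S
  obtain ⟨K, hK, hPK⟩ := isTightMeasureSet_iff_exists_isCompact_measure_compl_le.1
    (isTightMeasureSet_singleton (μ := P)) (ENNReal.ofReal ε) (by simpa using hε)
  obtain ⟨F, -, hF, hKF⟩ := hK.finite_cover_balls hδ
  refine ⟨F, hF, fun _ => ?_⟩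
  have : P (Metric.thickening δ F)ᶜ ≤ ENNReal.ofReal ε := by
    refine (measure_mono ?_).trans (hPK P rfl)
    rw [Set.compl_subset_compl, Metric.thickening_eq_biUnion_ball]
    exact hKF
  exact ENNReal.toReal_le_of_le_ofReal hε.le this

lemma UT_equicont {S ι : Type*} [MetricSpace S] [MeasurableSpace S] [BorelSpace S]
    (P : ι → Measure S) [∀ i, IsFiniteMeasure (P i)] (M : ℝ) (hM : 0 ≤ M)
    (hPM : ∀ i, (P i).real Set.univ ≤ M) (hUT : UT P) (K : ℝ≥0) :
    Equicontinuous (fun i (f : blSet S K) => ∫ x, f.1 x ∂(P i)) := by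
  intro f0
  rw [Metric.equicontinuousAt_iff_right]
  intro ε hε
  have hM1 : 0 < M + 1 := by linarith
  have hK1 : 0 < (K : ℝ) + 1 := by positivity
  obtain ⟨F, hF, hPF⟩ := hUT (ε / 8) (by positivity) (ε / (8 * (K + 1) * (M + 1))) (by positivity)
  set δ := ε / (8 * (K + 1) * (M + 1)) with hδ
  set η := ε / (4 * (M + 1)) with hη
  have hη0 : 0 < η := by positivity
  have hδ0 : 0 < δ := by positivity
  have hKδ : 2 * K * δ ≤ η := by
    have : 2 * (K + 1) * δ = η := by rw [hδ, hη]; field_simp; norm_num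
    nlinarith
  have hηM : η * M ≤ ε / 4 := by
    have : η * (M + 1) = ε / 4 := by rw [hη]; field_simp
    nlinarith
  have hnear : ∀ᶠ f : blSet S K in 𝓝 f0, ∀ x ∈ F, |f0.1 x - f.1 x| < η := by
    rw [hF.eventually_all]
    intro x _
    have hc : Continuous (fun f : blSet S K => |f0.1 x - f.1 x|) := by
      have : Continuous (fun f : blSet S K => f.1 x) :=
        (continuous_apply x).comp continuous_subtype_val
      exact (continuous_const.sub this).abs
    have := hc.tendsto f0
    simp only [sub_self, abs_zero] at this
    exact this.eventually_lt_const hη0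
  filter_upwards [hnear] with f hf i
  have hi0 := blSet_integrable f0.2 (P i)
  have hi1 := blSet_integrable f.2 (P i)
  rw [Real.dist_eq, ← integral_sub hi0 hi1]
  have hTm : MeasurableSet (Metric.thickening δ F)ᶜ := Metric.isOpen_thickening.measurableSet.compl
  have hb : ∀ x, |f0.1 x - f.1 x| ≤ 2 * η + (Metric.thickening δ F)ᶜ.indicator (fun _ => (2:ℝ)) x := by
    intro x
    by_cases hx : x ∈ Metric.thickening δ F
    · rw [Set.indicator_of_notMem (by simpa using hx)]
      obtain ⟨z, hz, hxz⟩ := Metric.mem_thickening_iff.1 hx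
      have h1 := abs_le.1 (f0.2.2 x z)
      have h2 := abs_le.1 (f.2.2 x z)
      have h3 := abs_lt.1 (hf z hz)
      have h4 : K * dist x z ≤ K * δ := by gcongr
      rw [abs_le]; constructor <;> linarith
    · rw [Set.indicator_of_mem (by simpa using hx)]
      have h1 := abs_le.1 (f0.2.1 x)
      have h2 := abs_le.1 (f.2.1 x)
      rw [abs_le]; constructor <;> linarith
  have hind : Integrable ((Metric.thickening δ F)ᶜ.indicator (fun _ => (2:ℝ))) (P i) :=
    (integrable_const _).indicator hTm
  calc |∫ x, (f0.1 x - f.1 x) ∂(P i)| ≤ ∫ x, |f0.1 x - f.1 x| ∂(P i) := abs_integral_le_integral_abs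
    _ ≤ ∫ x, (2 * η + (Metric.thickening δ F)ᶜ.indicator (fun _ => (2:ℝ)) x) ∂(P i) :=
        integral_mono (hi0.sub hi1).abs ((integrable_const _).add hind) hb
    _ = 2 * η * (P i).real Set.univ + 2 * (P i).real (Metric.thickening δ F)ᶜ := by
        rw [integral_add (integrable_const _) hind, integral_indicator hTm]
        simp; ring
    _ < ε := by
        have := hPF i
        have h2 : η * (P i).real Set.univ ≤ η * M := by gcongr; exact hPM i
        nlinarith

lemma bl_cont {S : Type*} [MetricSpace S] [CompleteSpace S]
    [TopologicalSpace.SeparableSpace S] [MeasurableSpace S] [BorelSpace S]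
    (P : Measure S) [IsFiniteMeasure P] (K : ℝ≥0) :
    Continuous (fun f : blSet S K => ∫ x, f.1 x ∂P) :=
  (UT_equicont (fun _ : Unit => P) (P.real Set.univ) (by positivity) (fun _ => le_rfl)
    (UT_single P) K).continuous ()

lemma exists_equi {S : Type*} [MetricSpace S] [CompleteSpace S]
    [TopologicalSpace.SeparableSpace S] [MeasurableSpace S] [BorelSpace S]
    (P : ℕ → Measure S) [∀ i, IsFiniteMeasure (P i)] (K : ℝ≥0)
    (hconv : ∀ f ∈ blSet S K, ∃ l : ℝ, Tendsto (fun n => ∫ x, f x ∂(P n)) atTop (𝓝 l))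
    (ε : ℝ) (hε : 0 < ε) :
    ∃ f0 : blSet S K, ∀ᶠ f : blSet S K in 𝓝 f0, ∀ n,
      |∫ x, f.1 x ∂(P n) - ∫ x, f0.1 x ∂(P n)| ≤ 3 * ε := by
  have : CompactSpace (blSet S K) := isCompact_iff_compactSpace.1 (blSet_compact S K)
  have : Nonempty (blSet S K) := ⟨⟨fun _ => 0, by simp [blSet]; intros; positivity⟩⟩
  let Φ : ℕ → blSet S K → ℝ := fun n f => ∫ x, f.1 x ∂(P n)
  have hΦ : ∀ n, Continuous (Φ n) := fun n => bl_cont (P n) K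
  let E : ℕ → Set (blSet S K) := fun N => ⋂ n, ⋂ (_ : N ≤ n), {f | |Φ n f - Φ N f| ≤ ε}
  have hE : ∀ N, IsClosed (E N) := fun N => isClosed_iInter fun n => isClosed_iInter fun _ =>
    isClosed_le (((hΦ n).sub (hΦ N)).abs) continuous_const
  have hU : ⋃ N, E N = Set.univ := by
    refine Set.eq_univ_of_forall fun f => ?_
    obtain ⟨l, hl⟩ := hconv f.1 f.2
    obtain ⟨N, hN⟩ := Metric.cauchySeq_iff'.1 hl.cauchySeq ε hε
    refine Set.mem_iUnion.2 ⟨N, Set.mem_iInter₂.2 fun n hn => (hN n hn).le⟩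
  obtain ⟨N, f0, hf0⟩ := nonempty_interior_of_iUnion_of_closed hE hU
  refine ⟨f0, ?_⟩
  have h1 : ∀ᶠ f in 𝓝 f0, f ∈ E N := mem_interior_iff_mem_nhds.1 hf0
  have h2 : ∀ᶠ f in 𝓝 f0, ∀ m ∈ Set.Iic N, |Φ m f - Φ m f0| ≤ ε := by
    rw [(Set.finite_Iic N).eventually_all]
    intro m _
    filter_upwards [Metric.tendsto_nhds.1 ((hΦ m).tendsto f0) ε hε] with f hf using hf.le
  have h3 := h1.self_of_nhds
  filter_upwards [h1, h2] with f hf1 hf2 n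
  change |Φ n f - Φ n f0| ≤ 3 * ε
  rcases le_total n N with h | h
  · linarith [hf2 n h]
  · have a : |Φ n f - Φ N f| ≤ ε := Set.mem_iInter₂.1 hf1 n h
    rw [abs_le] at a
    have b : |Φ n f0 - Φ N f0| ≤ ε := Set.mem_iInter₂.1 h3 n h
    rw [abs_le] at b
    have c := abs_le.1 (hf2 N (Set.mem_Iic.2 le_rfl))
    rw [abs_le]; constructor <;> linarith

lemma UT_of_conv {S : Type*} [MetricSpace S] [CompleteSpace S]
    [TopologicalSpace.SeparableSpace S] [MeasurableSpace S] [BorelSpace S]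
    (P : ℕ → Measure S) [∀ i, IsFiniteMeasure (P i)]
    (hconv : ∀ K : ℝ≥0, ∀ f ∈ blSet S K,
      ∃ l : ℝ, Tendsto (fun n => ∫ x, f x ∂(P n)) atTop (𝓝 l)) : UT P := by
  intro ε hε δ hδ
  set K : ℝ≥0 := 2 * δ.toNNReal⁻¹ with hK
  obtain ⟨f0, hf0⟩ := exists_equi P K (hconv K) (ε / 3) (by positivity)
  rw [nhds_subtype, Filter.eventually_comap, nhds_pi] at hf0
  obtain ⟨F, hF, t, ht, hsub⟩ := Filter.mem_pi.1 hf0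
  refine ⟨F, hF, fun n => ?_⟩
  have key : ∀ f : blSet S K, (∀ x ∈ F, f.1 x = f0.1 x) →
      |∫ x, f.1 x ∂(P n) - ∫ x, f0.1 x ∂(P n)| ≤ ε := by
    intro f hf
    have := hsub (a := f.1) (fun x hx => by rw [hf x hx]; exact mem_of_mem_nhds (ht x)) f rfl n
    linarith
  let τ : S → ℝ := fun x => (thickenedIndicator hδ F x : ℝ)
  have τ0 : ∀ x, 0 ≤ τ x := fun x => NNReal.coe_nonneg _
  have τ1 : ∀ x, τ x ≤ 1 := fun x => by exact_mod_cast thickenedIndicator_le_one hδ F x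
  have τF : ∀ x ∈ F, τ x = 1 := fun x hx => by
    simp only [τ]; rw [thickenedIndicator_one hδ F hx]; rfl
  have τT : ∀ x ∉ Metric.thickening δ F, τ x = 0 := fun x hx => by
    simp only [τ]; rw [thickenedIndicator_zero hδ F hx]; rfl
  have τL : ∀ x y, |τ x - τ y| * 2 ≤ K * dist x y := fun x y => by
    have := (lipschitzWith_thickenedIndicator hδ F).dist_le_mul x y
    rw [NNReal.dist_eq] at this
    rw [hK]; push_cast at this ⊢
    change |τ x - τ y| ≤ _ at this
    linarith
  have hu : (fun x => max (f0.1 x) (1 - 2 * τ x)) ∈ blSet S K := by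
    refine ⟨fun x => ?_, fun x y => ?_⟩
    · have := abs_le.1 (f0.2.1 x)
      have := τ0 x; have := τ1 x
      rw [abs_le]; constructor
      · exact le_max_of_le_left (by linarith)
      · exact max_le (by linarith) (by linarith)
    · refine (abs_max_sub_max_le_max _ _ _ _).trans (max_le (f0.2.2 x y) ?_)
      have := abs_le.1 (le_of_mul_le_mul_right ((τL x y).trans_eq (div_mul_cancel₀ (K * dist x y) (two_ne_zero)).symm) two_pos)
      rw [abs_le]; constructor <;> linarith
  have hv : (fun x => min (f0.1 x) (2 * τ x - 1)) ∈ blSet S K := by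
    refine ⟨fun x => ?_, fun x y => ?_⟩
    · have := abs_le.1 (f0.2.1 x)
      have := τ0 x; have := τ1 x
      rw [abs_le]; constructor
      · exact le_min (by linarith) (by linarith)
      · exact min_le_of_left_le (by linarith)
    · refine (abs_min_sub_min_le_max _ _ _ _).trans (max_le (f0.2.2 x y) ?_)
      have := abs_le.1 (le_of_mul_le_mul_right ((τL x y).trans_eq (div_mul_cancel₀ (K * dist x y) (two_ne_zero)).symm) two_pos)
      rw [abs_le]; constructor <;> linarith
  have ku := abs_le.1 (key ⟨_, hu⟩ (fun x hx => by
    have := abs_le.1 (f0.2.1 x)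
    simp only [τF x hx]; exact max_eq_left (by linarith)))
  have kv := abs_le.1 (key ⟨_, hv⟩ (fun x hx => by
    have := abs_le.1 (f0.2.1 x)
    simp only [τF x hx]; exact min_eq_left (by linarith)))
  have hTm : MeasurableSet (Metric.thickening δ F)ᶜ := Metric.isOpen_thickening.measurableSet.compl
  have hle : ∫ x, (Metric.thickening δ F)ᶜ.indicator (fun _ => (2:ℝ)) x ∂(P n) ≤
      ∫ x, (max (f0.1 x) (1 - 2 * τ x) - min (f0.1 x) (2 * τ x - 1)) ∂(P n) := by
    refine integral_mono ((integrable_const _).indicator hTm)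
      ((blSet_integrable hu (P n)).sub (blSet_integrable hv (P n))) fun x => ?_
    by_cases hx : x ∈ Metric.thickening δ F
    · simp only [Set.indicator_of_notMem (show x ∉ (Metric.thickening δ F)ᶜ by simpa using hx)]
      have := le_max_left (f0.1 x) (1 - 2 * τ x)
      have := min_le_left (f0.1 x) (2 * τ x - 1)
      linarith
    · simp only [Set.indicator_of_mem (show x ∈ (Metric.thickening δ F)ᶜ by simpa using hx)]
      have := le_max_right (f0.1 x) (1 - 2 * τ x)
      have := min_le_right (f0.1 x) (2 * τ x - 1)
      have := τT x hx
      linarith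
  rw [integral_sub (blSet_integrable hu (P n)) (blSet_integrable hv (P n)),
    integral_indicator hTm] at hle
  simp only [integral_const, smul_eq_mul, measureReal_restrict_apply_univ] at hle
  linarith [ku.1, ku.2, kv.1, kv.2]

lemma UT_compact {S ι : Type*} [MetricSpace S] [CompleteSpace S]
    [MeasurableSpace S] [BorelSpace S]
    (P : ι → Measure S) [∀ i, IsFiniteMeasure (P i)] (hUT : UT P) (ε : ℝ) (hε : 0 < ε) :
    ∃ K : Set S, IsCompact K ∧ ∀ i, P i Kᶜ ≤ ENNReal.ofReal ε := by
  have h := fun k : ℕ => hUT (ε / 2 / 2 ^ k) (by positivity) (1 / ((k : ℝ) + 1)) (by positivity)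
  choose F hF hPF using h
  refine ⟨⋂ k : ℕ, closure (Metric.thickening (1 / ((k : ℝ) + 1)) (F k)), ?_, fun i => ?_⟩
  · rw [isCompact_iff_totallyBounded_isComplete]
    refine ⟨?_, (isClosed_iInter fun k => isClosed_closure).isComplete⟩
    rw [Metric.totallyBounded_iff]
    intro r hr
    obtain ⟨k, hk⟩ := exists_nat_one_div_lt hr
    refine ⟨F k, hF k, ?_⟩
    rw [← Metric.thickening_eq_biUnion_ball]
    exact (Set.iInter_subset _ k).trans ((Metric.closure_thickening_subset_cthickening _ _).trans
      (Metric.cthickening_subset_thickening' hr hk _))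
  · calc P i (⋂ k : ℕ, closure (Metric.thickening (1 / ((k : ℝ) + 1)) (F k)))ᶜ
        ≤ P i (⋃ k : ℕ, (Metric.thickening (1 / ((k : ℝ) + 1)) (F k))ᶜ) := by
          refine measure_mono ?_
          rw [Set.compl_iInter]
          exact Set.iUnion_mono fun k => Set.compl_subset_compl.2 subset_closure
      _ ≤ ∑' k : ℕ, P i (Metric.thickening (1 / ((k : ℝ) + 1)) (F k))ᶜ := measure_iUnion_le _
      _ ≤ ∑' k : ℕ, ENNReal.ofReal (ε / 2 / 2 ^ k) := by
          refine ENNReal.tsum_le_tsum fun k => ?_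
          rw [← ENNReal.ofReal_toReal (measure_ne_top (P i) _)]
          exact ENNReal.ofReal_le_ofReal (hPF k i)
      _ = ENNReal.ofReal ε := by
          rw [← ENNReal.ofReal_tsum_of_nonneg (fun k => by positivity) (summable_geometric_two' ε),
            tsum_geometric_two']

lemma thick_mem {S : Type*} [MetricSpace S] {δ : ℝ} (hδ : 0 < δ) (F : Set S) :
    (fun x => (thickenedIndicator hδ F x : ℝ)) ∈ blSet S δ.toNNReal⁻¹ := by
  refine ⟨fun x => ?_, fun x y => ?_⟩
  · rw [abs_of_nonneg (NNReal.coe_nonneg _)]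
    exact_mod_cast thickenedIndicator_le_one hδ F x
  · have := (lipschitzWith_thickenedIndicator hδ F).dist_le_mul x y
    rwa [NNReal.dist_eq] at this

lemma meas_ext {S : Type*} [MetricSpace S] [MeasurableSpace S] [BorelSpace S]
    (P Q : Measure S) [IsFiniteMeasure P] [IsFiniteMeasure Q]
    (h : ∀ K : ℝ≥0, ∀ f ∈ blSet S K, ∫ x, f x ∂P = ∫ x, f x ∂Q) : P = Q := by
  have key : ∀ F : Set S, IsClosed F → P F = Q F := by
    intro F hF
    have hp : ∀ n : ℕ, (0 : ℝ) < 1 / ((n : ℝ) + 1) := fun n => by positivity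
    have hl := tendsto_one_div_add_atTop_nhds_zero_nat (𝕜 := ℝ)
    have a := tendsto_lintegral_thickenedIndicator_of_isClosed P hF hp hl
    have b := tendsto_lintegral_thickenedIndicator_of_isClosed Q hF hp hl
    refine tendsto_nhds_unique a (b.congr fun n => ?_)
    have e := h _ _ (thick_mem (hp n) F)
    have hi := fun R : Measure S => fun _ : IsFiniteMeasure R => blSet_integrable (thick_mem (hp n) F) R
    have f := fun R : Measure S => fun hR : IsFiniteMeasure R =>
      ofReal_integral_eq_lintegral_ofReal (hi R hR) (Eventually.of_forall fun x => NNReal.coe_nonneg _)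
    have f1 := f P inferInstance
    have f2 := f Q inferInstance
    simp only [ENNReal.ofReal_coe_nnreal] at f1 f2
    rw [← f1, ← f2, e]
  apply ext_of_generate_finite _ ?_ isPiSystem_isClosed
  · exact fun F F_closed ↦ key F F_closed
  · exact key _ isClosed_univ
  · rw [BorelSpace.measurable_eq (α := S), borel_eq_generateFrom_isClosed]

lemma exists_limit {S : Type*} [MetricSpace S] [CompleteSpace S]
    [TopologicalSpace.SeparableSpace S] [MeasurableSpace S] [BorelSpace S]
    (P : ℕ → FiniteMeasure S) (M : ℝ≥0) (hM : ∀ n, (P n).mass ≤ M)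
    (hUT : UT (fun n => (P n : Measure S)))
    (hconv : ∀ K : ℝ≥0, ∀ f ∈ blSet S K,
      ∃ l : ℝ, Tendsto (fun n => ∫ x, f x ∂(P n : Measure S)) atTop (𝓝 l)) :
    ∃ ν : FiniteMeasure S, Tendsto P atTop (𝓝 ν) := by
  have h := fun k : ℕ => UT_compact _ hUT (1 / ((k : ℝ) + 1)) (by positivity)
  choose K hK hPK using h
  let u : ℕ → ℝ≥0 := fun k => (1 / ((k : ℝ) + 1)).toNNReal
  have hu : Tendsto u atTop (𝓝 0) := by
    have := (continuous_real_toNNReal.tendsto 0).comp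
      (tendsto_one_div_add_atTop_nhds_zero_nat (𝕜 := ℝ))
    simpa [u, Function.comp_def] using this
  have hcpt := isCompact_setOfPred_finiteMeasure_mass_le_compl_isCompact_le M hu hK
    (Or.inl inferInstance)
  have hlim : ∀ U : Ultrafilter ℕ, ∃ ν : FiniteMeasure S, Tendsto P U (𝓝 ν) := by
    intro U
    obtain ⟨ν, -, hν⟩ := hcpt.ultrafilter_le_nhds (U.map P) (by
      rw [Filter.le_principal_iff]
      refine Filter.mem_map.2 (Filter.univ_mem' fun n => ?_)
      refine ⟨hM n, fun k => ?_⟩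
      have := hPK k n
      rw [← ENNReal.coe_le_coe, FiniteMeasure.ennreal_coeFn_eq_coeFn_toMeasure]
      exact this)
    exact ⟨ν, hν⟩
  have hbl : ∀ (U : Ultrafilter ℕ) (ν : FiniteMeasure S), Tendsto P U (𝓝 ν) →
      ∀ K : ℝ≥0, ∀ f ∈ blSet S K,
      Tendsto (fun n => ∫ x, f x ∂(P n : Measure S)) U (𝓝 (∫ x, f x ∂(ν : Measure S))) := by
    intro U ν hν K f hf
    exact FiniteMeasure.tendsto_iff_forall_integral_tendsto.1 hν
      (BoundedContinuousFunction.ofNormedAddCommGroup f (blSet_lip hf).continuous 1 hf.1)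
  obtain ⟨ν, hν⟩ := hlim (Ultrafilter.of atTop)
  refine ⟨ν, (tendsto_iff_ultrafilter _ _ _).2 fun U hU => ?_⟩
  obtain ⟨ν', hν'⟩ := hlim U
  have : ν' = ν := by
    apply FiniteMeasure.toMeasure_injective
    refine meas_ext _ _ fun K f hf => ?_
    obtain ⟨l, hl⟩ := hconv K f hf
    rw [tendsto_nhds_unique (hbl _ _ hν K f hf) (hl.mono_left (Ultrafilter.of_le atTop)),
      tendsto_nhds_unique (hbl _ _ hν' K f hf) (hl.mono_left hU)]
  rwa [← this]

lemma pairing_sub {S : Type*} [MeasurableSpace S] (P Q : Measure S) [IsFiniteMeasure P]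
    [IsFiniteMeasure Q] (f : S → ℝ) (hf : Measurable f) (C : ℝ) (hC : ∀ x, |f x| ≤ C) :
    pairing (P.toSignedMeasure - Q.toSignedMeasure) f = ∫ x, f x ∂P - ∫ x, f x ∂Q := by
  have hi : ∀ R : Measure S, IsFiniteMeasure R → Integrable f R := fun R _ =>
    Integrable.of_bound hf.aestronglyMeasurable C (Eventually.of_forall hC)
  set s := P.toSignedMeasure - Q.toSignedMeasure with hs
  have h1 := s.toSignedMeasure_toJordanDecomposition
  rw [JordanDecomposition.toSignedMeasure] at h1
  have h2 : s.toJordanDecomposition.posPart + Q = P + s.toJordanDecomposition.negPart := by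
    rw [← Measure.toSignedMeasure_eq_toSignedMeasure_iff, Measure.toSignedMeasure_add,
      Measure.toSignedMeasure_add]
    rw [hs, sub_eq_sub_iff_add_eq_add] at h1
    exact h1
  have h3 : ∫ x, f x ∂(s.toJordanDecomposition.posPart + Q) =
    ∫ x, f x ∂(P + s.toJordanDecomposition.negPart) := by rw [h2]
  rw [integral_add_measure (hi _ inferInstance) (hi _ inferInstance),
    integral_add_measure (hi _ inferInstance) (hi _ inferInstance)] at h3
  rw [pairing]; linarith

lemma isBL_blSet {S : Type*} [PseudoMetricSpace S] {K : ℝ≥0} {f : S → ℝ} (hf : f ∈ blSet S K) :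
    IsBL f := ⟨⟨1, hf.1⟩, K, blSet_lip hf⟩

/-- **Schur-like property, positive case.** If `(μ_n)` is a sequence of finite positive Borel
measures on a complete separable metric space such that `⟨μ_n, f⟩` converges for every bounded
Lipschitz `f`, then `⟨μ_n, f⟩` converges for every bounded continuous `f`, and there is a finite
positive Borel measure `μ` with `‖μ_n − μ‖*_BL → 0`. -/
theorem schur_like_positive {S : Type*} [MetricSpace S] [CompleteSpace S]
    [TopologicalSpace.SeparableSpace S] [MeasurableSpace S] [BorelSpace S]
    (μ : ℕ → SignedMeasure S) (hpos : ∀ n, 0 ≤ μ n)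
    (hconv : ∀ f : S → ℝ, IsBL f →
      ∃ l : ℝ, Tendsto (fun n => pairing (μ n) f) atTop (𝓝 l)) :
    (∀ f : S → ℝ, Continuous f → (∃ C : ℝ, ∀ x, |f x| ≤ C) →
      ∃ l : ℝ, Tendsto (fun n => pairing (μ n) f) atTop (𝓝 l)) ∧
    ∃ ν : SignedMeasure S, 0 ≤ ν ∧
      Tendsto (fun n => blDualNorm (μ n - ν)) atTop (𝓝 0) := by

  let P0 : ℕ → Measure S := fun n => (μ n).toMeasureOfZeroLE Set.univ MeasurableSet.univ
    ((VectorMeasure.le_restrict_univ_iff_le _ _).2 (hpos n))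
  have hfin : ∀ n, IsFiniteMeasure (P0 n) := fun n => by infer_instance
  have hP0 : ∀ n, (P0 n).toSignedMeasure = μ n := fun n =>
    SignedMeasure.toMeasureOfZeroLE_toSignedMeasure _ _
  let P : ℕ → FiniteMeasure S := fun n => ⟨P0 n, hfin n⟩
  have hpair : ∀ n (f : S → ℝ) (C : ℝ), Continuous f → (∀ x, |f x| ≤ C) →
      pairing (μ n) f = ∫ x, f x ∂(P n : Measure S) := by
    intro n f C hf hC
    have := pairing_sub (P0 n) 0 f hf.measurable C hC
    rw [hP0 n, Measure.toSignedMeasure_zero, sub_zero] at this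
    rw [integral_zero_measure, sub_zero] at this
    exact this
  have hconv' : ∀ K : ℝ≥0, ∀ f ∈ blSet S K,
      ∃ l : ℝ, Tendsto (fun n => ∫ x, f x ∂(P n : Measure S)) atTop (𝓝 l) := by
    intro K f hf
    obtain ⟨l, hl⟩ := hconv f (isBL_blSet hf)
    exact ⟨l, hl.congr fun n => hpair n f 1 (blSet_lip hf).continuous hf.1⟩
  have hUT : UT (fun n => (P n : Measure S)) := UT_of_conv _ hconv'
  obtain ⟨M, hM⟩ : ∃ M : ℝ≥0, ∀ n, (P n).mass ≤ M := by
    obtain ⟨l, hl⟩ := hconv' 0 (fun _ => 1) (by simp [blSet])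
    obtain ⟨M, hM⟩ := hl.bddAbove_range
    refine ⟨M.toNNReal, fun n => ?_⟩
    have := hM ⟨n, rfl⟩
    simp only [integral_const, smul_eq_mul, mul_one] at this
    exact NNReal.le_toNNReal_of_coe_le this
  obtain ⟨ν, hν⟩ := exists_limit P M hM hUT hconv'
  have hint := FiniteMeasure.tendsto_iff_forall_integral_tendsto.1 hν
  have hint' : ∀ (f : S → ℝ) (C : ℝ), Continuous f → (∀ x, |f x| ≤ C) →
      Tendsto (fun n => ∫ x, f x ∂(P n : Measure S)) atTop (𝓝 (∫ x, f x ∂(ν : Measure S))) :=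
    fun f C hf hC => hint (BoundedContinuousFunction.ofNormedAddCommGroup f hf C hC)
  refine ⟨fun f hf ⟨C, hC⟩ => ⟨_, (hint' f C hf hC).congr fun n => (hpair n f C hf hC).symm⟩,
    (ν : Measure S).toSignedMeasure, Measure.zero_le_toSignedMeasure _, ?_⟩
  have : CompactSpace (blSet S 1) := isCompact_iff_compactSpace.1 (blSet_compact S 1)
  have heq := UT_equicont (fun n => (P n : Measure S)) M M.2 (fun n => hM n) hUT 1
  have hunif := (heq.tendsto_uniformFun_iff_pi atTop
    (fun f : blSet S 1 => ∫ x, f.1 x ∂(ν : Measure S))).2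
    (tendsto_pi_nhds.2 fun f => hint' f.1 1 (blSet_lip f.2).continuous f.2.1)
  rw [UniformFun.tendsto_iff_tendstoUniformly, Metric.tendstoUniformly_iff] at hunif
  rw [Metric.tendsto_nhds]
  intro ε hε
  filter_upwards [hunif (ε / 2) (by positivity)] with n hn
  have h0 : 0 ≤ blDualNorm (μ n - (ν : Measure S).toSignedMeasure) := by
    refine Real.sSup_nonneg ?_
    rintro r ⟨f, C, K, -, -, -, rfl⟩
    exact abs_nonneg _
  rw [Real.dist_eq, sub_zero, abs_of_nonneg h0]
  refine lt_of_le_of_lt (Real.sSup_le ?_ (by positivity)) (half_lt_self hε)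
  rintro r ⟨f, C, K, hC, hK, hCK, rfl⟩
  have hf : f ∈ blSet S 1 := by
    refine ⟨fun x => (hC x).trans ?_, fun x y => (hK.dist_le_mul x y).trans ?_⟩
    · linarith [K.2]
    · have : 0 ≤ C := (abs_nonneg _).trans (hC x)
      have : (K : ℝ) ≤ 1 := by linarith
      gcongr
      exact_mod_cast this
  rw [← hP0 n, pairing_sub (P0 n) ν f hK.continuous.measurable C hC, abs_sub_comm]
  exact (hn ⟨f, hf⟩).le
end

section
/- Let (S,d) be a complete separable metric space. Then M(S) is U_b(S)-weakly sequentially complete: if (μ_n) is a sequence of finite signed Borel measures on S such that for every bounded uniformly continuous function f : S → ℝ the sequence ∫_S f dμ_n is Cauchy in ℝ, then there exists a finite signed Borel measure μ on S such that ∫_S f dμ_n → ∫_S f dμ for every bounded uniformly continuous f : S → ℝ. -/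
open MeasureTheory Filter Topology

/-- difference of integrals -/
noncomputable def DD {S : Type*} [MeasurableSpace S] (α β : Measure S) (f : S → ℝ) : ℝ :=
  (∫ x, f x ∂α) - ∫ x, f x ∂β

lemma integrable_of_bdd {S : Type*} [MeasurableSpace S] (α : Measure S) [IsFiniteMeasure α]
    {f : S → ℝ} (hf : Measurable f) {C : ℝ} (hC : ∀ x, |f x| ≤ C) : Integrable f α :=
  Integrable.of_bound hf.aestronglyMeasurable C (Eventually.of_forall hC)

lemma DD_add {S : Type*} [MeasurableSpace S] (α β : Measure S) {f g : S → ℝ}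
    (h1 : Integrable f α) (h2 : Integrable f β) (h3 : Integrable g α) (h4 : Integrable g β) :
    DD α β (fun x => f x + g x) = DD α β f + DD α β g := by
  unfold DD
  rw [integral_add h1 h3, integral_add h2 h4]; ring

lemma DD_sub {S : Type*} [MeasurableSpace S] (α β : Measure S) {f g : S → ℝ}
    (h1 : Integrable f α) (h2 : Integrable f β) (h3 : Integrable g α) (h4 : Integrable g β) :
    DD α β (fun x => f x - g x) = DD α β f - DD α β g := by
  unfold DD
  rw [integral_sub h1 h3, integral_sub h2 h4]; ring

lemma DD_bound {S : Type*} [MeasurableSpace S] (α β : Measure S) [IsFiniteMeasure α]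
    [IsFiniteMeasure β] {f : S → ℝ} {a : ℝ} {B : Set S} (hB : MeasurableSet B)
    (h : ∀ x, |f x| ≤ a + B.indicator (fun _ => (1:ℝ)) x) :
    |DD α β f| ≤ a * (α.real Set.univ + β.real Set.univ) + (α.real B + β.real B) := by
  have key : ∀ (γ : Measure S) [IsFiniteMeasure γ], |∫ x, f x ∂γ| ≤ a * γ.real Set.univ + γ.real B := by
    intro γ _
    have hi : Integrable (B.indicator (fun _ => (1:ℝ))) γ :=
      (integrable_const (1:ℝ)).indicator hB
    calc |∫ x, f x ∂γ| ≤ ∫ x, (a + B.indicator (fun _ => (1:ℝ)) x) ∂γ := by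
          rw [← Real.norm_eq_abs]
          exact norm_integral_le_of_norm_le ((integrable_const a).add hi) (Eventually.of_forall h)
      _ = _ := by
          rw [integral_add (integrable_const a) hi, integral_indicator hB]
          simp [mul_comm]
  have h1 := key α
  have h2 := key β
  unfold DD
  have := abs_sub (∫ x, f x ∂α) (∫ x, f x ∂β)
  linarith

lemma exists_cover {S : Type*} [MetricSpace S] [MeasurableSpace S] [BorelSpace S]
    (u : ℕ → S) (hu : DenseRange u) (α β : Measure S) [IsFiniteMeasure α]
    [IsFiniteMeasure β] {r ε : ℝ} (hr : 0 < r) (hε : 0 < ε) :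
    ∃ N : ℕ, α.real (Metric.thickening r (u '' Set.Iic N))ᶜ +
      β.real (Metric.thickening r (u '' Set.Iic N))ᶜ < ε := by
  have hmono : Antitone (fun N : ℕ => (Metric.thickening r (u '' Set.Iic N))ᶜ) := by
    intro a b hab
    exact Set.compl_subset_compl.2 (Metric.thickening_subset_of_subset r (Set.image_mono (Set.Iic_subset_Iic.2 hab)))
  have hint : (⋂ N : ℕ, (Metric.thickening r (u '' Set.Iic N))ᶜ) = ∅ := by
    ext x
    simp only [Set.mem_iInter, Set.mem_compl_iff, Set.mem_empty_iff_false, iff_false, not_forall, not_not]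
    obtain ⟨n, hn⟩ := hu.exists_dist_lt x hr
    exact ⟨n, Metric.mem_thickening_iff.2 ⟨u n, ⟨n, Set.mem_Iic.2 le_rfl, rfl⟩, hn⟩⟩
  have key : ∀ (γ : Measure S) [IsFiniteMeasure γ], Tendsto (fun N : ℕ => γ.real (Metric.thickening r (u '' Set.Iic N))ᶜ) atTop (𝓝 0) := by
    intro γ _
    have := tendsto_measure_iInter_atTop (μ := γ) (s := fun N : ℕ => (Metric.thickening r (u '' Set.Iic N))ᶜ)
      (fun i => Metric.isOpen_thickening.measurableSet.compl.nullMeasurableSet) hmono ⟨0, measure_ne_top _ _⟩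
    rw [hint, measure_empty] at this
    have := (ENNReal.tendsto_toReal (by simp : (0:ENNReal) ≠ ⊤)).comp this
    simpa [Measure.real, Function.comp_def] using this
  have := (key α).add (key β)
  rw [add_zero] at this
  exact (this.eventually (gt_mem_nhds hε)).exists

lemma schur_core {S : Type*} [MetricSpace S]
    [TopologicalSpace.SeparableSpace S] [MeasurableSpace S] [BorelSpace S] [Nonempty S]
    (α β : ℕ → Measure S) [∀ n, IsFiniteMeasure (α n)] [∀ n, IsFiniteMeasure (β n)] (M : ℝ)
    (hM : ∀ n, (α n).real Set.univ + (β n).real Set.univ ≤ M)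
    (hlim : ∀ f : S → ℝ, UniformContinuous f → (∃ C : ℝ, ∀ x, |f x| ≤ C) →
      Tendsto (fun n => DD (α n) (β n) f) atTop (𝓝 0))
    (f : ℕ → S → ℝ) (hf0 : ∀ k x, 0 ≤ f k x) (hf1 : ∀ k x, f k x ≤ 1)
    (hue : ∀ ε > 0, ∃ δ > 0, ∀ k x y, dist x y < δ → |f k x - f k y| < ε)
    (hpt : ∀ x, Tendsto (fun k => f k x) atTop (𝓝 0))
    (c : ℝ) (hc : 0 < c) (hbig : ∀ k, c ≤ |DD (α k) (β k) (f k)|) : False := by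
  classical
  have hM0 : 0 ≤ M := le_trans (by positivity) (hM 0)
  obtain ⟨η, hη, hηM⟩ : ∃ η > 0, 2 * η * M ≤ c / 4 := by
    refine ⟨c / (8 * (M + 1)), by positivity, ?_⟩
    rw [show 2 * (c / (8 * (M + 1))) * M = (c / 4) * (M / (M + 1)) by field_simp; ring]
    have : M / (M + 1) ≤ 1 := by rw [div_le_one (by positivity)]; linarith
    nlinarith
  obtain ⟨δ, hδ, hfδ⟩ := hue η hη
  set u := TopologicalSpace.denseSeq S with hu
  have hud : DenseRange u := TopologicalSpace.denseRange_denseSeq S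
  have hδ3 : 0 < δ / 3 := by positivity
  choose N hN using fun k => exists_cover u hud (α k) (β k) hδ3 (show 0 < c / 16 by positivity)
  set T : ℕ → Set S := fun k => Metric.thickening (δ / 3) (u '' Set.Iic (N k)) with hT
  have hTm : ∀ k, MeasurableSet (T k) := fun k => Metric.isOpen_thickening.measurableSet
  set χ : ℕ → S → ℝ := fun k x => (thickenedIndicator hδ3 (T k) x : ℝ) with hχ
  have hχ0 : ∀ k x, 0 ≤ χ k x := fun k x => NNReal.coe_nonneg _
  have hχ1 : ∀ k x, χ k x ≤ 1 := fun k x => by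
    exact_mod_cast thickenedIndicator_le_one hδ3 (T k) x
  have hχT : ∀ k x, x ∈ T k → χ k x = 1 := fun k x hx => by
    simp only [hχ, thickenedIndicator_one hδ3 (T k) hx, NNReal.coe_one]
  have hχue : ∀ ε > 0, ∃ δ' > 0, ∀ k x y, dist x y < δ' → |χ k x - χ k y| < ε := by
    intro ε hε
    refine ⟨ε * (δ / 3), by positivity, fun k x y hxy => ?_⟩
    have h := (lipschitzWith_thickenedIndicator hδ3 (T k)).dist_le_mul x y
    rw [NNReal.dist_eq] at h
    refine lt_of_le_of_lt h ?_
    have : ((δ/3).toNNReal⁻¹ : NNReal) = ((δ / 3)⁻¹ : ℝ) := by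
      rw [NNReal.coe_inv, Real.coe_toNNReal _ hδ3.le]
    rw [this, inv_mul_lt_iff₀ hδ3]
    linarith
  -- points where the cutoff is nonzero
  have hχsupp : ∀ k x, χ k x ≠ 0 → ∃ i ≤ N k, dist x (u i) < δ := by
    intro k x hx
    by_contra hcon
    push Not at hcon
    apply hx
    have : x ∉ Metric.thickening (δ / 3) (T k) := by
      intro hmem
      obtain ⟨y, hy, hxy⟩ := Metric.mem_thickening_iff.1 hmem
      obtain ⟨z, ⟨i, hi, rfl⟩, hyz⟩ := Metric.mem_thickening_iff.1 hy
      have h1 := hcon i hi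
      have h2 := dist_triangle x y (u i)
      linarith
    simp only [hχ, thickenedIndicator_zero hδ3 (T k) this, NNReal.coe_zero]
  set g : ℕ → S → ℝ := fun k x => max (f k x - 2 * η) 0 with hg
  have hg0 : ∀ k x, 0 ≤ g k x := fun k x => le_max_right _ _
  have hg1 : ∀ k x, g k x ≤ 1 := fun k x => max_le (by linarith [hf1 k x]) zero_le_one
  set h : ℕ → S → ℝ := fun k x => min (g k x) (χ k x) with hh
  have hh0 : ∀ k x, 0 ≤ h k x := fun k x => le_min (hg0 k x) (hχ0 k x)
  have hh1 : ∀ k x, h k x ≤ 1 := fun k x => (min_le_left _ _).trans (hg1 k x)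
  have hgf : ∀ k x y, |g k x - g k y| ≤ |f k x - f k y| := by
    intro k x y
    have := abs_max_sub_max_le_abs (f k x - 2 * η) (f k y - 2 * η) 0
    simpa using this
  have hhue : ∀ ε > 0, ∃ δ' > 0, ∀ k x y, dist x y < δ' → |h k x - h k y| < ε := by
    intro ε hε
    obtain ⟨d1, hd1, h1⟩ := hue ε hε
    obtain ⟨d2, hd2, h2⟩ := hχue ε hε
    refine ⟨min d1 d2, lt_min hd1 hd2, fun k x y hxy => ?_⟩
    have e1 := h1 k x y (hxy.trans_le (min_le_left _ _))
    have e2 := h2 k x y (hxy.trans_le (min_le_right _ _))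
    exact (abs_min_sub_min_le_max _ _ _ _).trans_lt (max_lt ((hgf k x y).trans_lt e1) e2)
  have hfuc : ∀ k, UniformContinuous (f k) := fun k => by
    rw [Metric.uniformContinuous_iff]
    intro ε hε
    obtain ⟨d, hd, h1⟩ := hue ε hε
    exact ⟨d, hd, fun x y hxy => h1 k x y hxy⟩
  have hhuc : ∀ k, UniformContinuous (h k) := fun k => by
    rw [Metric.uniformContinuous_iff]
    intro ε hε
    obtain ⟨d, hd, h1⟩ := hhue ε hε
    exact ⟨d, hd, fun x y hxy => h1 k x y hxy⟩
  have hfm : ∀ k, Measurable (f k) := fun k => (hfuc k).continuous.measurable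
  have hhm : ∀ k, Measurable (h k) := fun k => (hhuc k).continuous.measurable
  have habs : ∀ {a : ℝ}, 0 ≤ a → a ≤ 1 → |a| ≤ 1 := fun h0 h1 => by rwa [abs_of_nonneg h0]
  -- the relation
  let R : ℕ → ℕ → Prop := fun a b => a < b ∧ (∀ i ≤ N a, f b (u i) < η) ∧
    |DD (α b) (β b) (h a)| ≤ (c / 8) * (1/2) ^ (a + 1)
  have hR : ∀ a, ∀ᶠ b in atTop, R a b := by
    intro a
    refine (eventually_gt_atTop a).and (Eventually.and ?_ ?_)
    · have := (Set.finite_Iic (N a)).eventually_all (l := atTop) (p := fun i b => f b (u i) < η)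
      exact this.2 (fun i _ => (hpt (u i)).eventually (gt_mem_nhds hη))
    · have := (hlim (h a) (hhuc a) ⟨1, fun x => habs (hh0 a x) (hh1 a x)⟩).abs
      rw [abs_zero] at this
      exact (this.eventually (gt_mem_nhds (show 0 < (c / 8) * (1/2) ^ (a + 1) by positivity))).mono
        fun b hb => hb.le
  obtain ⟨κ, -, hκ⟩ := exists_seq_of_forall_finset_exists (fun _ : ℕ => True) R (fun s _ => by
    obtain ⟨b, hb⟩ := ((Filter.eventually_all_finset s).2 (fun a _ => hR a)).exists
    exact ⟨b, trivial, hb⟩)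
  have hκmono : StrictMono κ := fun a b hab => (hκ a b hab).1
  -- disjointness
  have hdis : ∀ j l x, j < l → χ (κ j) x ≠ 0 → g (κ l) x = 0 := by
    intro j l x hjl hx
    obtain ⟨i, hi, hxi⟩ := hχsupp _ _ hx
    have h1 := (hκ j l hjl).2.1 i hi
    have h2 := hfδ (κ l) x (u i) hxi
    rw [abs_lt] at h2
    exact max_eq_right (by linarith)
  set F : S → ℝ := fun x => ⨆ j, h (κ j) x with hF
  have hbdd : ∀ x, BddAbove (Set.range fun j => h (κ j) x) := fun x =>
    ⟨1, by rintro _ ⟨j, rfl⟩; exact hh1 _ _⟩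
  have hF0 : ∀ x, 0 ≤ F x := fun x => Real.iSup_nonneg fun j => hh0 _ _
  have hF1 : ∀ x, F x ≤ 1 := fun x => ciSup_le fun j => hh1 _ _
  have hFle : ∀ x y ε, (∀ j, |h (κ j) x - h (κ j) y| ≤ ε) → F x ≤ F y + ε := by
    intro x y ε hxy
    refine ciSup_le fun j => ?_
    have h1 := le_ciSup (hbdd y) j
    have h2 := (abs_le.1 (hxy j)).2
    simp only [hF]
    linarith
  have hFuc : UniformContinuous F := by
    rw [Metric.uniformContinuous_iff]
    intro ε hε
    obtain ⟨d, hd, h1⟩ := hhue (ε / 2) (by positivity)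
    refine ⟨d, hd, fun x y hxy => ?_⟩
    have e1 := hFle x y (ε / 2) (fun j => (h1 _ _ _ hxy).le)
    have e2 := hFle y x (ε / 2) (fun j => (h1 _ _ _ (by rwa [dist_comm])).le)
    rw [Real.dist_eq, abs_lt]
    constructor <;> linarith
  have hFm : Measurable F := hFuc.continuous.measurable
  have hFlim := (hlim F hFuc ⟨1, fun x => habs (hF0 x) (hF1 x)⟩).comp hκmono.tendsto_atTop
  have hFlim := hFlim.abs
  rw [abs_zero] at hFlim
  obtain ⟨l, hl⟩ := (hFlim.eventually (gt_mem_nhds (show 0 < c / 8 by positivity))).exists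
  simp only [Function.comp] at hl
  set A := α (κ l)
  set B := β (κ l)
  have hAB := hM (κ l)
  have hNl := hN (κ l)
  have int : ∀ {v : S → ℝ} (γ : Measure S) [IsFiniteMeasure γ], Measurable v → (∀ x, 0 ≤ v x) → (∀ x, v x ≤ 1) →
    Integrable v γ := fun γ _ hm h0 h1 => integrable_of_bdd γ hm (C := 1) fun x => habs (h0 x) (h1 x)
  -- remainder
  set Gs : S → ℝ := fun x => ∑ j ∈ Finset.range l, h (κ j) x with hGs
  have hGi : ∀ (γ : Measure S) [IsFiniteMeasure γ], Integrable Gs γ := fun γ _ =>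
    integrable_finsetSum _ fun j _ => int γ (hhm _) (hh0 _) (hh1 _)
  have hDG : |DD A B Gs| ≤ c / 8 := by
    have e : DD A B Gs = ∑ j ∈ Finset.range l, DD A B (h (κ j)) := by
      simp only [DD, hGs]
      rw [integral_finsetSum _ fun j _ => int A (hhm _) (hh0 _) (hh1 _),
        integral_finsetSum _ fun j _ => int B (hhm _) (hh0 _) (hh1 _), Finset.sum_sub_distrib]
    rw [e]
    refine (Finset.abs_sum_le_sum_abs _ _).trans ?_
    calc ∑ j ∈ Finset.range l, |DD A B (h (κ j))|
        ≤ ∑ j ∈ Finset.range l, (c / 8) * (1/2) ^ (j + 1) := by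
          refine Finset.sum_le_sum fun j hj => ?_
          refine (hκ j l (Finset.mem_range.1 hj)).2.2.trans ?_
          refine mul_le_mul_of_nonneg_left ?_ (by positivity)
          exact pow_le_pow_of_le_one (by norm_num) (by norm_num) (by have := hκmono.id_le j; simpa using this)
      _ ≤ c / 8 := by
          rw [← Finset.mul_sum]
          have : ∀ n : ℕ, ∑ j ∈ Finset.range n, (1/2 : ℝ) ^ (j + 1) = 1 - (1/2)^n := by
            intro n
            induction n with
            | zero => simp
            | succ n ih => rw [Finset.sum_range_succ, ih]; ring
          rw [this]
          have : (0:ℝ) ≤ (1/2)^l := by positivity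
          nlinarith
  have hrem : ∀ x, |F x - (Gs x + h (κ l) x)| ≤ 0 + (T (κ l))ᶜ.indicator (fun _ => (1:ℝ)) x := by
    intro x
    have hsum : Gs x + h (κ l) x = ∑ j ∈ Finset.range (l + 1), h (κ j) x := by
      rw [Finset.sum_range_succ]
    rw [hsum, zero_add]
    have hnn : (0:ℝ) ≤ (T (κ l))ᶜ.indicator (fun _ => (1:ℝ)) x :=
      Set.indicator_nonneg (fun _ _ => zero_le_one) x
    by_cases hz : ∀ j, h (κ j) x = 0
    · simp only [hF, hz]
      simpa using hnn
    · push Not at hz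
      obtain ⟨j, hj⟩ := hz
      have huniq : ∀ i, i ≠ j → h (κ i) x = 0 := by
        intro i hij
        by_contra hi
        have nz : ∀ i, h (κ i) x ≠ 0 → χ (κ i) x ≠ 0 ∧ g (κ i) x ≠ 0 := by
          intro i hi
          constructor
          · intro h0; apply hi; simp only [hh, h0]; exact min_eq_right (hg0 _ _)
          · intro h0; apply hi; simp only [hh, h0]; exact min_eq_left (hχ0 _ _)
        rcases lt_or_gt_of_ne hij with h1 | h1
        · exact (nz j hj).2 (hdis _ _ x h1 (nz i hi).1)
        · exact (nz i hi).2 (hdis _ _ x h1 (nz j hj).1)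
      have hFx : F x = h (κ j) x := by
        apply le_antisymm
        · refine ciSup_le fun i => ?_
          by_cases hij : i = j
          · rw [hij]
          · rw [huniq i hij]; exact hh0 _ _
        · exact le_ciSup (hbdd x) j
      rw [hFx]
      by_cases hjl : j < l + 1
      · rw [Finset.sum_eq_single_of_mem j (Finset.mem_range.2 hjl) (fun i _ hi => huniq i hi)]
        simpa using hnn
      · rw [Finset.sum_eq_zero (fun i hi => huniq i (by rintro rfl; exact hjl (Finset.mem_range.1 hi)))]
        have hx : x ∈ (T (κ l))ᶜ := by
          intro hx
          have h1 : χ (κ l) x ≠ 0 := by rw [hχT _ _ hx]; exact one_ne_zero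
          have h2 := hdis l j x (by omega) h1
          apply hj
          simp only [hh, h2]; exact min_eq_left (hχ0 _ _)
        rw [Set.indicator_of_mem hx, sub_zero]
        exact habs (hh0 _ _) (hh1 _ _)
  have hb1 := DD_bound A B (hTm (κ l)).compl hrem
  have hrem2 : ∀ x, |f (κ l) x - h (κ l) x| ≤ 2 * η + (T (κ l))ᶜ.indicator (fun _ => (1:ℝ)) x := by
    intro x
    by_cases hx : x ∈ T (κ l)
    · have e : h (κ l) x = g (κ l) x := by
        simp only [hh, hχT _ _ hx]; exact min_eq_left (hg1 _ _)
      rw [e, Set.indicator_of_notMem (by simpa using hx), add_zero, abs_le]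
      simp only [hg]
      have := hf0 (κ l) x
      constructor
      · rcases max_cases (f (κ l) x - 2 * η) 0 with h | h <;> linarith
      · rcases max_cases (f (κ l) x - 2 * η) 0 with h | h <;> linarith
    · rw [Set.indicator_of_mem (by simpa using hx), abs_le]
      have := hf0 (κ l) x
      have := hf1 (κ l) x
      have := hh0 (κ l) x
      have := hh1 (κ l) x
      constructor <;> linarith
  have hb2 := DD_bound A B (hTm (κ l)).compl hrem2
  have ih : ∀ (γ : Measure S) [IsFiniteMeasure γ], Integrable (h (κ l)) γ := fun γ _ =>
    int γ (hhm _) (hh0 _) (hh1 _)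
  have iF : ∀ (γ : Measure S) [IsFiniteMeasure γ], Integrable F γ := fun γ _ => int γ hFm hF0 hF1
  have if' : ∀ (γ : Measure S) [IsFiniteMeasure γ], Integrable (f (κ l)) γ := fun γ _ =>
    int γ (hfm _) (hf0 _) (hf1 _)
  rw [DD_sub A B (g := fun x => Gs x + h (κ l) x) (iF A) (iF B) ((hGi A).add (ih A)) ((hGi B).add (ih B)),
    DD_add A B (hGi A) (hGi B) (ih A) (ih B)] at hb1
  rw [DD_sub A B (if' A) (if' B) (ih A) (ih B)] at hb2
  have hb3 := hbig (κ l)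
  have hb4 : 2 * η * (A.real Set.univ + B.real Set.univ) ≤ c / 4 :=
    (mul_le_mul_of_nonneg_left hAB (by positivity)).trans hηM
  change c ≤ |DD A B (f (κ l))| at hb3
  change A.real (T (κ l))ᶜ + B.real (T (κ l))ᶜ < c / 16 at hNl
  have t1 := abs_le.1 hb1
  have t2 := abs_le.1 hb2
  have t3 := abs_lt.1 hl
  have t4 := abs_le.1 hDG
  rcases abs_cases (DD A B (f (κ l))) with ⟨e, _⟩ | ⟨e, _⟩ <;> rw [e] at hb3 <;> linarith

lemma schur {S : Type*} [MetricSpace S]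
    [TopologicalSpace.SeparableSpace S] [MeasurableSpace S] [BorelSpace S] [Nonempty S]
    (α β : ℕ → Measure S) [∀ n, IsFiniteMeasure (α n)] [∀ n, IsFiniteMeasure (β n)] (M : ℝ)
    (hM : ∀ n, (α n).real Set.univ + (β n).real Set.univ ≤ M)
    (L : (S → ℝ) → ℝ)
    (hlim : ∀ f : S → ℝ, UniformContinuous f → (∃ C : ℝ, ∀ x, |f x| ≤ C) →
      Tendsto (fun n => DD (α n) (β n) f) atTop (𝓝 (L f)))
    (f : ℕ → S → ℝ) (hf0 : ∀ k x, 0 ≤ f k x) (hf1 : ∀ k x, f k x ≤ 1)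
    (hue : ∀ ε > 0, ∃ δ > 0, ∀ k x y, dist x y < δ → |f k x - f k y| < ε)
    (hpt : ∀ x, Tendsto (fun k => f k x) atTop (𝓝 0)) :
    Tendsto (fun k => L (f k)) atTop (𝓝 0) := by
  have habs : ∀ {a : ℝ}, 0 ≤ a → a ≤ 1 → |a| ≤ 1 := fun h0 h1 => by rwa [abs_of_nonneg h0]
  have hfuc : ∀ k, UniformContinuous (f k) := fun k => by
    rw [Metric.uniformContinuous_iff]
    intro ε hε
    obtain ⟨d, hd, h1⟩ := hue ε hε
    exact ⟨d, hd, fun x y hxy => h1 k x y hxy⟩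
  by_contra hcon
  obtain ⟨c, hc, hfr⟩ : ∃ c > 0, ∃ᶠ k in atTop, c ≤ |L (f k)| := by
    rw [Metric.tendsto_nhds] at hcon
    push Not at hcon
    obtain ⟨c, hc, h⟩ := hcon
    refine ⟨c, hc, ?_⟩
    refine h.mono fun k hk => ?_
    simpa [Real.dist_eq] using hk
  -- for each `N` pick `m ≥ N`, `p ≥ N`
  have hex : ∀ N : ℕ, ∃ m p : ℕ, N ≤ m ∧ N ≤ p ∧ c / 4 ≤ |DD (α p) (β p) (f m) - DD (α N) (β N) (f m)| := by
    intro N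
    have h0 : Tendsto (fun m => DD (α N) (β N) (f m)) atTop (𝓝 0) := by
      have key : ∀ (γ : Measure S) [IsFiniteMeasure γ], Tendsto (fun m => ∫ x, f m x ∂γ) atTop (𝓝 0) := by
        intro γ _
        have := tendsto_integral_of_dominated_convergence (μ := γ) (F := f) (f := fun _ => (0:ℝ)) (fun _ => (1:ℝ))
          (fun n => (hfuc n).continuous.measurable.aestronglyMeasurable) (integrable_const _)
          (fun n => Eventually.of_forall fun x => habs (hf0 n x) (hf1 n x))
          (Eventually.of_forall hpt)
        simpa using this
      simpa [DD] using (key (α N)).sub (key (β N))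
    have h0' := h0.abs
    rw [abs_zero] at h0'
    obtain ⟨m, hm1, hm2, hm3⟩ := (hfr.and_eventually ((h0'.eventually (gt_mem_nhds (show 0 < c / 4 by positivity))).and
      (eventually_ge_atTop N))).exists
    have h1 := (hlim (f m) (hfuc m) ⟨1, fun x => habs (hf0 m x) (hf1 m x)⟩).abs
    obtain ⟨p, hp1, hp2⟩ := ((h1.eventually (lt_mem_nhds (show c / 2 < |L (f m)| by linarith))).and
      (eventually_ge_atTop N)).exists
    refine ⟨m, p, hm3, hp2, ?_⟩
    have := abs_sub_abs_le_abs_sub (DD (α p) (β p) (f m)) (DD (α N) (β N) (f m))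
    linarith
  choose m p hm hp hmp using hex
  have hmt : Tendsto m atTop atTop := tendsto_atTop_mono hm tendsto_id
  have hpt' : Tendsto p atTop atTop := tendsto_atTop_mono hp tendsto_id
  have hsplit : ∀ n (v : S → ℝ), UniformContinuous v → (∃ C : ℝ, ∀ x, |v x| ≤ C) →
      DD (α (p n) + β n) (β (p n) + α n) v = DD (α (p n)) (β (p n)) v - DD (α n) (β n) v := by
    intro n v hv ⟨C, hC⟩
    have hi : ∀ (γ : Measure S) [IsFiniteMeasure γ], Integrable v γ := fun γ _ =>
      integrable_of_bdd γ hv.continuous.measurable hC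
    unfold DD
    rw [integral_add_measure (hi _) (hi _), integral_add_measure (hi _) (hi _)]
    ring
  refine schur_core (fun n => α (p n) + β n) (fun n => β (p n) + α n) (M + M) ?_ ?_ (fun n => f (m n))
    (fun k => hf0 _) (fun k => hf1 _) ?_ (fun x => (hpt x).comp hmt) (c / 4) (by positivity) ?_
  · intro n
    have h1 := hM n
    have h2 := hM (p n)
    rw [measureReal_add_apply, measureReal_add_apply]
    linarith
  · intro v hv hb
    have := ((hlim v hv hb).comp hpt').sub (hlim v hv hb)
    rw [sub_self] at this
    refine this.congr fun n => ?_
    rw [hsplit n v hv hb]; rfl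
  · intro ε hε
    obtain ⟨d, hd, h⟩ := hue ε hε
    exact ⟨d, hd, fun k => h _⟩
  · intro k
    rw [hsplit k _ (hfuc _) ⟨1, fun x => habs (hf0 _ x) (hf1 _ x)⟩]
    exact hmp k

lemma sign_approx {X : Type*} [MetricSpace X] [MeasurableSpace X] [BorelSpace X]
    (P N : Measure X) [IsFiniteMeasure P] [IsFiniteMeasure N] (hs : P ⟂ₘ N) {ε : ℝ} (hε : 0 < ε) :
    ∃ g : X → ℝ, UniformContinuous g ∧ (∀ x, |g x| ≤ 1) ∧
      (∫ x, (1 - g x) ∂P) + (∫ x, (1 + g x) ∂N) ≤ ε := by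
  obtain ⟨A0, hA0, hP, hN⟩ := hs
  obtain ⟨F, hFA, hFc, hF⟩ := hA0.compl.exists_isClosed_sdiff_lt (μ := P) (measure_ne_top _ _)
    (ε := ENNReal.ofReal (ε / 4)) (by simpa using hε)
  have hPF : P.real Fᶜ ≤ ε / 4 := by
    have : P Fᶜ ≤ ENNReal.ofReal (ε / 4) := by
      calc P Fᶜ ≤ P ((A0ᶜ \ F) ∪ A0) := measure_mono (by intro x hx; by_cases h : x ∈ A0 <;> simp_all)
        _ ≤ P (A0ᶜ \ F) + P A0 := measure_union_le _ _
        _ ≤ _ := by rw [hP, add_zero]; exact hF.le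
    exact ENNReal.toReal_le_of_le_ofReal (by positivity) this
  have hNF : N F = 0 := measure_mono_null hFA hN
  have hpos : ∀ n : ℕ, 0 < 1 / ((n:ℝ) + 1) := fun n => by positivity
  set th : ℕ → X → ℝ := fun n x => (thickenedIndicator (hpos n) F x : ℝ) with hth
  have hth0 : ∀ k x, 0 ≤ th k x := fun k x => NNReal.coe_nonneg _
  have hth1 : ∀ k x, th k x ≤ 1 := fun k x => by
    exact NNReal.coe_le_one.2 (thickenedIndicator_le_one (hpos k) F x)
  have hthuc : ∀ n, UniformContinuous (th n) := fun n =>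
    uniformContinuous_subtype_val.comp (lipschitzWith_thickenedIndicator (hpos n) F).uniformContinuous
  have hthl : ∀ x, Tendsto (fun n => th n x) atTop (𝓝 (F.indicator (fun _ => (1:ℝ)) x)) := by
    intro x
    have := thickenedIndicator_tendsto_indicator_closure hpos tendsto_one_div_add_atTop_nhds_zero_nat F
    rw [tendsto_pi_nhds] at this
    have := (NNReal.continuous_coe.tendsto _).comp (this x)
    rw [hFc.closure_eq] at this
    have e : F.indicator (fun _ => (1:ℝ)) x = ((F.indicator (fun _ => (1:NNReal)) x : NNReal) : ℝ) := by
      by_cases h : x ∈ F <;> simp [h]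
    rw [e]
    exact this
  have hint : ∀ (γ : Measure X) [IsFiniteMeasure γ],
      Tendsto (fun n => ∫ x, th n x ∂γ) atTop (𝓝 (γ.real F)) := by
    intro γ _
    have := tendsto_integral_of_dominated_convergence (μ := γ) (F := th)
      (f := F.indicator (fun _ => (1:ℝ))) (fun _ => (1:ℝ))
      (fun n => (hthuc n).continuous.measurable.aestronglyMeasurable) (integrable_const _)
      (fun n => Eventually.of_forall fun x => by rw [Real.norm_eq_abs, abs_of_nonneg (hth0 n x)]; exact hth1 n x)
      (Eventually.of_forall hthl)
    rw [integral_indicator hFc.measurableSet] at this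
    simpa using this
  have hi : ∀ n (γ : Measure X) [IsFiniteMeasure γ], Integrable (th n) γ := fun n γ _ =>
    integrable_of_bdd γ (hthuc n).continuous.measurable (C := 1) fun x => by
      rw [abs_of_nonneg (hth0 n x)]; exact hth1 n x
  have hlim : Tendsto (fun n => (2 * P.real Set.univ - 2 * ∫ x, th n x ∂P) + 2 * ∫ x, th n x ∂N) atTop
      (𝓝 ((2 * P.real Set.univ - 2 * P.real F) + 2 * N.real F)) :=
    (tendsto_const_nhds.sub ((hint P).const_mul 2)).add ((hint N).const_mul 2)
  have hlt : (2 * P.real Set.univ - 2 * P.real F) + 2 * N.real F < ε := by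
    have h1 : N.real F = 0 := by simp [Measure.real, hNF]
    have h2 := measureReal_compl (μ := P) hFc.measurableSet
    rw [h1]; linarith
  obtain ⟨n, hn⟩ := (hlim.eventually (gt_mem_nhds hlt)).exists
  refine ⟨fun x => 2 * th n x - 1, ?_, ?_, ?_⟩
  · have : UniformContinuous (fun x => th n x + th n x - 1) := ((hthuc n).add (hthuc n)).sub uniformContinuous_const
    convert this using 2
    ring
  · intro x
    rw [abs_le]
    constructor <;> linarith [hth0 n x, hth1 n x]
  · have e1 : ∫ x, (1 - (2 * th n x - 1)) ∂P = 2 * P.real Set.univ - 2 * ∫ x, th n x ∂P := by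
      have : ∀ x, (1 - (2 * th n x - 1)) = 2 - 2 * th n x := fun x => by ring
      simp only [this]
      rw [integral_sub (integrable_const _) ((hi n P).const_mul 2), integral_const_mul]
      simp [mul_comm]
    have e2 : ∫ x, (1 + (2 * th n x - 1)) ∂N = 2 * ∫ x, th n x ∂N := by
      have : ∀ x, (1 + (2 * th n x - 1)) = 2 * th n x := fun x => by ring
      simp only [this]
      rw [integral_const_mul]
    rw [e1, e2]; exact hn.le

lemma DD_congr_jordan {X : Type*} [MeasurableSpace X] (α β : Measure X) [IsFiniteMeasure α]
    [IsFiniteMeasure β] {f : X → ℝ} (hf : Measurable f) {C : ℝ} (hC : ∀ x, |f x| ≤ C) :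
    pairing (α.toSignedMeasure - β.toSignedMeasure) f = DD α β f := by
  set σ := α.toSignedMeasure - β.toSignedMeasure with hσ
  set P := σ.toJordanDecomposition.posPart
  set N := σ.toJordanDecomposition.negPart
  have e : P + β = α + N := by
    ext i hi
    have h1 := σ.apply_eq_posPart_real_sub_negPart_real hi
    have h2 : σ i = α.real i - β.real i := by
      rw [hσ]; exact Measure.toSignedMeasure_sub_apply hi
    have h3 : (P + β).real i = (α + N).real i := by
      rw [measureReal_add_apply, measureReal_add_apply]
      change σ i = P.real i - N.real i at h1
      linarith
    exact (ENNReal.toReal_eq_toReal_iff' (measure_ne_top _ _) (measure_ne_top _ _)).1 h3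
  have hi : ∀ (γ : Measure X) [IsFiniteMeasure γ], Integrable f γ := fun γ _ => integrable_of_bdd γ hf hC
  have e2 : ∫ x, f x ∂(P + β) = ∫ x, f x ∂(α + N) := by rw [e]
  rw [integral_add_measure (hi _) (hi _), integral_add_measure (hi _) (hi _)] at e2
  change (∫ x, f x ∂P) - ∫ x, f x ∂N = _
  unfold DD
  linarith

lemma bs_sub {E : Type*} [NormedAddCommGroup E] [NormedSpace ℝ E] [CompleteSpace E] (U : Set E)
    (h0 : (0 : E) ∈ U) (hadd : ∀ f ∈ U, ∀ g ∈ U, f + g ∈ U) (hsmul : ∀ (c : ℝ), ∀ f ∈ U, c • f ∈ U)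
    (hU : IsClosed U) (T : ℕ → E → ℝ) (Tadd : ∀ n f g, T n (f + g) = T n f + T n g)
    (Tsmul : ∀ n (c : ℝ) f, T n (c • f) = c * T n f) (Tb : ∀ n, ∃ C, ∀ f, |T n f| ≤ C * ‖f‖)
    (hb : ∀ f ∈ U, ∃ C, ∀ n, |T n f| ≤ C) : ∃ C, ∀ n, ∀ f ∈ U, |T n f| ≤ C * ‖f‖ := by
  let p : Submodule ℝ E :=
    { carrier := U
      add_mem' := fun {f g} hf hg => hadd f hf g hg
      zero_mem' := h0
      smul_mem' := fun c f hf => hsmul c f hf }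
  have hp : IsClosed (p : Set E) := hU
  have : CompleteSpace p := hp.completeSpace_coe
  let lin : ℕ → p →ₗ[ℝ] ℝ := fun n =>
    { toFun := fun f => T n f.1
      map_add' := fun f g => Tadd n f.1 g.1
      map_smul' := fun c f => Tsmul n c f.1 }
  choose K hK using Tb
  let T' : ℕ → p →L[ℝ] ℝ := fun n => (lin n).mkContinuous (K n) (fun f => hK n f.1)
  have hpb : ∀ f : p, ∃ C, ∀ n, ‖T' n f‖ ≤ C := fun f => hb f.1 f.2
  obtain ⟨C, hC⟩ : ∃ C', ∀ n, ‖T' n‖ ≤ C' := banach_steinhaus hpb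
  exact ⟨C, fun n f hf => (T' n).le_of_opNorm_le (hC n) ⟨f, hf⟩⟩

lemma UbSub_closed (S : Type*) [MetricSpace S] : 
    IsClosed {f : BoundedContinuousFunction S ℝ | UniformContinuous f} := by
  refine isClosed_of_closure_subset fun f hf => ?_
  obtain ⟨u, hu, hul⟩ := mem_closure_iff_seq_limit.1 hf
  rw [BoundedContinuousFunction.tendsto_iff_tendstoUniformly] at hul
  exact hul.uniformContinuous (Eventually.of_forall hu).frequently

lemma mass_bound {S : Type*} [MetricSpace S] [MeasurableSpace S] [BorelSpace S]
    (α β : ℕ → Measure S) [∀ n, IsFiniteMeasure (α n)] [∀ n, IsFiniteMeasure (β n)]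
    (hs : ∀ n, α n ⟂ₘ β n)
    (hb : ∀ f : S → ℝ, UniformContinuous f → (∃ C : ℝ, ∀ x, |f x| ≤ C) →
      ∃ C, ∀ n, |DD (α n) (β n) f| ≤ C) :
    ∃ M, ∀ n, (α n).real Set.univ + (β n).real Set.univ ≤ M := by
  have hi : ∀ (f : BoundedContinuousFunction S ℝ) (γ : Measure S) [IsFiniteMeasure γ], Integrable f γ :=
    fun f γ _ => integrable_of_bdd γ f.continuous.measurable (fun x => f.norm_coe_le_norm x)
  obtain ⟨C, hC⟩ := bs_sub {f : BoundedContinuousFunction S ℝ | UniformContinuous f}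
    (show UniformContinuous (fun _ : S => (0:ℝ)) from uniformContinuous_const) (fun f hf g hg => UniformContinuous.add hf hg)
    (fun c f hf => UniformContinuous.const_smul hf c) (UbSub_closed S)
    (fun n f => DD (α n) (β n) f)
    (fun n f g => DD_add _ _ (hi f _) (hi f _) (hi g _) (hi g _))
    (fun n c f => by simp [DD, integral_const_mul, mul_sub])
    (fun n => ⟨((α n).real Set.univ + (β n).real Set.univ), fun f => by
      have := DD_bound (α n) (β n) (f := f) (a := ‖f‖) MeasurableSet.empty
        (by intro x; simpa using f.norm_coe_le_norm x)
      refine this.trans (le_of_eq ?_)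
      simp [mul_comm]⟩)
    (fun f hf => hb f hf ⟨‖f‖, fun x => f.norm_coe_le_norm x⟩)
  refine ⟨|C| + 1, fun n => ?_⟩
  obtain ⟨g, hg, hg1, hgi⟩ := sign_approx (α n) (β n) (hs n) zero_lt_one
  let G : BoundedContinuousFunction S ℝ := BoundedContinuousFunction.ofNormedAddCommGroup g hg.continuous 1 hg1
  have hGn : ‖G‖ ≤ 1 := BoundedContinuousFunction.norm_ofNormedAddCommGroup_le _ zero_le_one hg1
  have h1 : |DD (α n) (β n) g| ≤ |C| * 1 :=
    (hC n G hg).trans ((mul_le_mul_of_nonneg_right (le_abs_self C) (norm_nonneg _)).trans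
      (mul_le_mul_of_nonneg_left hGn (abs_nonneg C)))
  have h3 := (abs_le.1 h1).2
  have hgI : ∀ (γ : Measure S) [IsFiniteMeasure γ], Integrable g γ := fun γ _ => hi G γ
  rw [integral_sub (integrable_const _) (hgI _), integral_add (integrable_const _) (hgI _)] at hgi
  simp only [integral_const, smul_eq_mul, mul_one] at hgi
  unfold DD at h3
  change _ - (∫ x, g x ∂(α n)) + (_ + ∫ x, g x ∂(β n)) ≤ 1 at hgi
  linarith

lemma sign_approx_top {X : Type*} [TopologicalSpace X] [TopologicalSpace.MetrizableSpace X]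
    [MeasurableSpace X] [BorelSpace X]
    (P N : Measure X) [IsFiniteMeasure P] [IsFiniteMeasure N] (hs : P ⟂ₘ N) {ε : ℝ} (hε : 0 < ε) :
    ∃ g : X → ℝ, Continuous g ∧ (∀ x, |g x| ≤ 1) ∧
      (∫ x, (1 - g x) ∂P) + (∫ x, (1 + g x) ∂N) ≤ ε := by
  let _ := TopologicalSpace.metrizableSpaceMetric X
  obtain ⟨g, h1, h2⟩ := sign_approx P N hs hε
  exact ⟨g, h1.continuous, h2⟩

lemma compact_limit {S K : Type*} [MeasurableSpace S] [TopologicalSpace K] [CompactSpace K]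
    [T2Space K] [MeasurableSpace K] [BorelSpace K] (e : S → K) (he : Measurable e)
    (α : ℕ → Measure S) [∀ n, IsFiniteMeasure (α n)] (M : ℝ)
    (hM : ∀ n, (α n).real Set.univ ≤ M) (U : Ultrafilter ℕ) :
    ∃ a : Measure K, IsFiniteMeasure a ∧ ∀ φ : K → ℝ, Continuous φ →
      Tendsto (fun n => ∫ x, φ (e x) ∂(α n)) U (𝓝 (∫ z, φ z ∂a)) := by
  let A : ℕ → FiniteMeasure K := fun n => ⟨(α n).map e, inferInstance⟩
  have hA : ∀ n, (A n).mass ≤ M.toNNReal := by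
    intro n
    have h1 : ((A n).mass : ℝ) = (α n).real Set.univ := by
      change ((α n).map e).real Set.univ = _
      rw [map_measureReal_apply he MeasurableSet.univ, Set.preimage_univ]
    rw [← NNReal.coe_le_coe, h1]
    exact (hM n).trans (Real.le_coe_toNNReal M)
  obtain ⟨a, -, ha⟩ := (isCompact_setOfPred_finiteMeasure_le_of_compactSpace K M.toNNReal).ultrafilter_le_nhds'
    (U.map A) (Filter.mem_map.2 (Filter.univ_mem' hA))
  have ha' : Tendsto A U (𝓝 a) := ha
  rw [FiniteMeasure.tendsto_iff_forall_integral_tendsto] at ha'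
  refine ⟨a, inferInstance, fun φ hφ => ?_⟩
  have := ha' (BoundedContinuousFunction.mkOfCompact ⟨φ, hφ⟩)
  refine this.congr fun n => ?_
  change ∫ z, φ z ∂((α n).map e) = _
  rw [integral_map he.aemeasurable]
  exact (hφ.measurable.stronglyMeasurable).aestronglyMeasurable

lemma repr_compact {S K : Type*} [MetricSpace S] [CompleteSpace S]
    [TopologicalSpace.SeparableSpace S] [MeasurableSpace S] [BorelSpace S] [Nonempty S]
    [UniformSpace K] [CompactSpace K] [T2Space K] [TopologicalSpace.MetrizableSpace K]
    [SecondCountableTopology K] [MeasurableSpace K] [BorelSpace K]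
    (e : S → K) (he : UniformContinuous e) (hd : DenseRange e)
    (u : ℕ → S) (hu : DenseRange u) (w : ℕ → K → ℝ) (hwc : ∀ i, Continuous (w i))
    (hw : ∀ i s, w i (e s) = min 1 (dist s (u i)))
    (α β : ℕ → Measure S) [∀ n, IsFiniteMeasure (α n)] [∀ n, IsFiniteMeasure (β n)] (M : ℝ)
    (hM : ∀ n, (α n).real Set.univ + (β n).real Set.univ ≤ M)
    (L : (S → ℝ) → ℝ)
    (hlim : ∀ f : S → ℝ, UniformContinuous f → (∃ C : ℝ, ∀ x, |f x| ≤ C) →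
      Tendsto (fun n => DD (α n) (β n) f) atTop (𝓝 (L f))) :
    ∃ P N : Measure S, IsFiniteMeasure P ∧ IsFiniteMeasure N ∧
      ∀ φ : K → ℝ, Continuous φ → L (fun s => φ (e s)) = DD P N (fun s => φ (e s)) := by
  have hec : Continuous e := he.continuous
  have hbd : ∀ φ : K → ℝ, Continuous φ → ∃ C : ℝ, ∀ z, |φ z| ≤ C := by
    intro φ hφ
    obtain ⟨C, hC⟩ := (isCompact_range hφ).isBounded.exists_norm_le
    exact ⟨C, fun z => hC _ ⟨z, rfl⟩⟩
  have huc : ∀ φ : K → ℝ, Continuous φ → UniformContinuous (fun s => φ (e s)) := fun φ hφ =>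
    (CompactSpace.uniformContinuous_of_continuous hφ).comp he
  obtain ⟨a, ha, hal⟩ := compact_limit e hec.measurable α M
    (fun n => by have := hM n; have : 0 ≤ (β n).real Set.univ := measureReal_nonneg; linarith) (hyperfilter ℕ)
  obtain ⟨b, hb, hbl⟩ := compact_limit e hec.measurable β M
    (fun n => by have := hM n; have : 0 ≤ (α n).real Set.univ := measureReal_nonneg; linarith) (hyperfilter ℕ)
  have hLab : ∀ φ : K → ℝ, Continuous φ → L (fun s => φ (e s)) = DD a b φ := by
    intro φ hφ
    obtain ⟨C, hC⟩ := hbd φ hφ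
    have h1 := (hlim _ (huc φ hφ) ⟨C, fun s => hC _⟩).mono_left Nat.hyperfilter_le_atTop
    exact tendsto_nhds_unique h1 ((hal φ hφ).sub (hbl φ hφ))
  set σ := a.toSignedMeasure - b.toSignedMeasure with hσ
  set P := σ.toJordanDecomposition.posPart with hP
  set N := σ.toJordanDecomposition.negPart with hN
  have hPN : P ⟂ₘ N := σ.toJordanDecomposition.mutuallySingular
  have hL : ∀ φ : K → ℝ, Continuous φ → L (fun s => φ (e s)) = DD P N φ := by
    intro φ hφ
    obtain ⟨C, hC⟩ := hbd φ hφ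
    rw [hLab φ hφ, ← DD_congr_jordan a b hφ.measurable hC]
    rfl
  have hint : ∀ φ : K → ℝ, Continuous φ → ∀ (γ : Measure K) [IsFiniteMeasure γ], Integrable φ γ := by
    intro φ hφ γ _
    obtain ⟨C, hC⟩ := hbd φ hφ
    exact integrable_of_bdd γ hφ.measurable hC
  have hw0 : ∀ i z, 0 ≤ w i z := fun i => isClosed_property hd (isClosed_le continuous_const (hwc i))
    (fun s => by rw [hw]; exact le_min zero_le_one dist_nonneg)
  have hw1 : ∀ i z, w i z ≤ 1 := fun i => isClosed_property hd (isClosed_le (hwc i) continuous_const)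
    (fun s => by rw [hw]; exact min_le_left _ _)
  -- running minimum
  set h : ℕ → K → ℝ := fun m z => (Finset.range (m + 1)).inf' (by simp) (fun i => w i z) with hh
  have hhc : ∀ m, Continuous (h m) := fun m => Continuous.finset_inf'_apply _ fun i _ => hwc i
  have hh0 : ∀ m z, 0 ≤ h m z := fun m z => Finset.le_inf' _ _ fun i _ => hw0 i z
  have hhw : ∀ m i z, i ≤ m → h m z ≤ w i z := fun m i z him =>
    Finset.inf'_le _ (Finset.mem_range.2 (by omega))
  have hh1 : ∀ m z, h m z ≤ 1 := fun m z => (hhw m 0 z (Nat.zero_le _)).trans (hw1 0 z)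
  have hhle : ∀ m s t, h m (e s) ≤ h m (e t) + dist s t := by
    intro m s t
    rw [← sub_le_iff_le_add]
    refine Finset.le_inf' _ _ fun i hi => ?_
    have h1 := hhw m i (e s) (by have := Finset.mem_range.1 hi; omega)
    rw [hw] at h1
    rw [hw]
    have h2 := dist_triangle s t (u i)
    have h3 := dist_nonneg (x := s) (y := t)
    rcases min_cases 1 (dist t (u i)) with ⟨q, _⟩ | ⟨q, _⟩ <;> rw [q]
    · linarith [min_le_left 1 (dist s (u i))]
    · linarith [min_le_right 1 (dist s (u i))]
  have hhl : ∀ m s t, |h m (e s) - h m (e t)| ≤ dist s t := by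
    intro m s t
    rw [abs_le]
    have h1 := hhle m s t
    have h2 := hhle m t s
    rw [dist_comm t s] at h2
    constructor <;> linarith
  have hhpt : ∀ s, Tendsto (fun m => h m (e s)) atTop (𝓝 0) := by
    intro s
    rw [Metric.tendsto_atTop]
    intro ε hε
    obtain ⟨i, hi⟩ := hu.exists_dist_lt s hε
    refine ⟨i, fun m hm => ?_⟩
    rw [Real.dist_eq, sub_zero, abs_of_nonneg (hh0 _ _)]
    refine (hhw m i _ hm).trans_lt ?_
    rw [hw]
    exact (min_le_right _ _).trans_lt hi
  -- multipliers
  have hmul : ∀ g : K → ℝ, Continuous g → (∀ z, 0 ≤ g z) → (∀ z, g z ≤ 1) →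
      Tendsto (fun m => DD P N (fun z => g z * h m z)) atTop (𝓝 0) := by
    intro g hg g0 g1
    have := schur α β M hM L hlim (fun m s => g (e s) * h m (e s))
      (fun m s => mul_nonneg (g0 _) (hh0 _ _))
      (fun m s => mul_le_one₀ (g1 _) (hh0 _ _) (hh1 _ _)) ?_ ?_
    · refine this.congr fun m => ?_
      exact hL (fun z => g z * h m z) (hg.mul (hhc m))
    · intro ε hε
      obtain ⟨d, hd, hgd⟩ := Metric.uniformContinuous_iff.1 (huc g hg) (ε / 2) (by positivity)
      refine ⟨min d (ε / 2), lt_min hd (by positivity), fun k x y hxy => ?_⟩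
      have e1 := hgd (hxy.trans_le (min_le_left _ _))
      have e2 := (hhl k x y).trans_lt (hxy.trans_le (min_le_right _ _))
      rw [Real.dist_eq] at e1
      have e3 : g (e x) * h k (e x) - g (e y) * h k (e y) =
        (g (e x) - g (e y)) * h k (e x) + g (e y) * (h k (e x) - h k (e y)) := by ring
      rw [e3]
      refine (abs_add_le _ _).trans_lt ?_
      rw [abs_mul, abs_mul, abs_of_nonneg (hh0 _ _), abs_of_nonneg (g0 _)]
      have e4 := mul_le_of_le_one_right (abs_nonneg (g (e x) - g (e y))) (hh1 k (e x))
      have e5 := mul_le_of_le_one_left (abs_nonneg (h k (e x) - h k (e y))) (g1 (e y))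
      linarith
    · intro s
      have := (hhpt s).const_mul (g (e s))
      simpa using this
  set H : K → ℝ := fun z => ⨅ i, w i z with hH
  have hHb : ∀ z, BddBelow (Set.range fun i => w i z) := fun z => ⟨0, by rintro _ ⟨i, rfl⟩; exact hw0 i z⟩
  have hH0 : ∀ z, 0 ≤ H z := fun z => Real.iInf_nonneg fun i => hw0 i z
  have hHh : ∀ m z, H z ≤ h m z := fun m z => Finset.le_inf' _ _ fun i _ => ciInf_le (hHb z) i
  have hHm : Measurable H := Measurable.iInf fun i => (hwc i).measurable
  have hHi : ∀ (γ : Measure K) [IsFiniteMeasure γ], Integrable H γ := fun γ _ =>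
    integrable_of_bdd γ hHm (C := 1) fun z => by
      rw [abs_of_nonneg (hH0 z)]; exact (hHh 0 z).trans (hh1 0 z)
  have hHzero : (∫ z, H z ∂P) + ∫ z, H z ∂N ≤ 0 := by
    refine le_of_forall_pos_le_add fun ε hε => ?_
    rw [zero_add]
    obtain ⟨g, hg, hg1, hgi⟩ := sign_approx_top P N hPN (show 0 < ε / 2 by positivity)
    have t1 := hmul (fun z => max (g z) 0) (hg.max continuous_const) (fun z => le_max_right _ _)
      (fun z => max_le (abs_le.1 (hg1 z)).2 zero_le_one)
    have t2 := hmul (fun z => max (-g z) 0) (hg.neg.max continuous_const) (fun z => le_max_right _ _)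
      (fun z => max_le (by linarith [(abs_le.1 (hg1 z)).1]) zero_le_one)
    have t3 := t1.sub t2
    rw [sub_zero] at t3
    obtain ⟨m, hm⟩ := (t3.eventually (gt_mem_nhds (show 0 < ε / 2 by positivity))).exists
    have c1 : Continuous (fun z => max (g z) 0 * h m z) := (hg.max continuous_const).mul (hhc m)
    have c2 : Continuous (fun z => max (-g z) 0 * h m z) := (hg.neg.max continuous_const).mul (hhc m)
    rw [← DD_sub P N (hint _ c1 _) (hint _ c1 _) (hint _ c2 _) (hint _ c2 _)] at hm
    have e1 : (fun z => max (g z) 0 * h m z - max (-g z) 0 * h m z) = fun z => g z * h m z := by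
      funext z
      rw [← sub_mul]
      congr 1
      rcases le_total (g z) 0 with q | q
      · rw [max_eq_right q, max_eq_left (by linarith)]; ring
      · rw [max_eq_left q, max_eq_right (by linarith)]; ring
    rw [e1] at hm
    have iP : ∫ z, H z ∂P ≤ ∫ z, ((1 - g z) + g z * h m z) ∂P := by
      refine integral_mono (hHi P) (hint _ ((continuous_const.sub hg).add (hg.mul (hhc m))) P) fun z => ?_
      refine (hHh m z).trans ?_
      have := (abs_le.1 (hg1 z)).2
      have := hh1 m z
      show h m z ≤ (1 - g z) + g z * h m z
      nlinarith
    have iN : ∫ z, H z ∂N ≤ ∫ z, ((1 + g z) - g z * h m z) ∂N := by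
      refine integral_mono (hHi N) (hint _ ((continuous_const.add hg).sub (hg.mul (hhc m))) N) fun z => ?_
      refine (hHh m z).trans ?_
      have := (abs_le.1 (hg1 z)).1
      have := hh1 m z
      show h m z ≤ (1 + g z) - g z * h m z
      nlinarith
    rw [integral_add (hint (fun z => 1 - g z) (continuous_const.sub hg) P) (hint (fun z => g z * h m z) (hg.mul (hhc m)) P)] at iP
    rw [integral_sub (hint (fun z => 1 + g z) (continuous_const.add hg) N) (hint (fun z => g z * h m z) (hg.mul (hhc m)) N)] at iN
    unfold DD at hm
    linarith
  have hran : ∀ z, H z = 0 → z ∈ Set.range e := by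
    intro z hz
    have hne : (comap e (𝓝 z)).NeBot := by
      rw [comap_neBot_iff]
      intro t ht
      obtain ⟨_, hy, ⟨s, rfl⟩⟩ := mem_closure_iff_nhds.1 (hd z) t ht
      exact ⟨s, hy⟩
    have hca : Cauchy (comap e (𝓝 z)) := by
      rw [Metric.cauchy_iff]
      refine ⟨hne, fun ε hε => ?_⟩
      obtain ⟨i, hi⟩ := exists_lt_of_ciInf_lt (show (⨅ i, w i z) < min 1 (ε / 2) by
        change H z < _; rw [hz]; exact lt_min zero_lt_one (by positivity))
      refine ⟨e ⁻¹' {y | w i y < min 1 (ε / 2)}, preimage_mem_comap ((isOpen_lt (hwc i) continuous_const).mem_nhds hi), ?_⟩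
      have q : ∀ s, s ∈ e ⁻¹' {y | w i y < min 1 (ε / 2)} → dist s (u i) < ε / 2 := by
        intro s hs
        have hs : w i (e s) < min 1 (ε / 2) := hs
        rw [hw] at hs
        rcases min_cases 1 (dist s (u i)) with ⟨q, _⟩ | ⟨q, _⟩ <;> rw [q] at hs
        · exact absurd (hs.trans_le (min_le_left _ _)) (lt_irrefl _)
        · exact hs.trans_le (min_le_right _ _)
      intro x hx y hy
      have := dist_triangle_right x y (u i)
      linarith [q x hx, q y hy]
    obtain ⟨s, hs⟩ := CompleteSpace.complete hca
    refine ⟨s, ?_⟩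
    have l1 : Tendsto e (comap e (𝓝 z)) (𝓝 (e s)) := (hec.tendsto s).mono_left hs
    exact tendsto_nhds_unique l1 tendsto_comap
  have hinj : Function.Injective e := by
    intro s t hst
    by_contra hne
    have hpos : 0 < dist s t := dist_pos.2 hne
    obtain ⟨i, hi⟩ := hu.exists_dist_lt s (show 0 < min 1 (dist s t / 2) from lt_min zero_lt_one (by positivity))
    have h1 := hw i s
    rw [hst, hw i t, min_eq_right (hi.le.trans (min_le_left _ _))] at h1
    have h2 : dist t (u i) = dist s (u i) := by
      rcases min_cases 1 (dist t (u i)) with ⟨q, _⟩ | ⟨q, _⟩ <;> rw [q] at h1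
      · exact absurd (hi.trans_le (min_le_left _ _)) (by rw [← h1]; exact lt_irrefl _)
      · exact h1
    have h3 := dist_triangle_right s t (u i)
    have := hi.trans_le (min_le_right _ _)
    linarith
  have : SecondCountableTopology S := UniformSpace.secondCountable_of_separable S
  have hme : MeasurableEmbedding e := hec.measurableEmbedding hinj
  have hP0 : 0 ≤ ∫ z, H z ∂P := integral_nonneg hH0
  have hN0 : 0 ≤ ∫ z, H z ∂N := integral_nonneg hH0
  have conc : ∀ (γ : Measure K) [IsFiniteMeasure γ], ∫ z, H z ∂γ = 0 → (γ.comap e).map e = γ := by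
    intro γ _ hγ
    rw [hme.map_comap]
    apply Measure.restrict_eq_self_of_ae_mem
    rw [integral_eq_zero_iff_of_nonneg hH0 (hHi γ)] at hγ
    exact hγ.mono fun z hz => hran z hz
  have cP := conc P (by linarith)
  have cN := conc N (by linarith)
  refine ⟨P.comap e, N.comap e, ?_, ?_, ?_⟩
  · exact ⟨by rw [hme.comap_apply]; exact measure_lt_top _ _⟩
  · exact ⟨by rw [hme.comap_apply]; exact measure_lt_top _ _⟩
  · intro φ hφ
    rw [hL φ hφ]
    unfold DD
    conv_lhs => rw [← cP, ← cN]
    rw [hme.integral_map, hme.integral_map]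

/-- truncated distances to a sequence -/
noncomputable def cubeMap {S : Type*} [MetricSpace S] (u : ℕ → S) (s : S) : ℕ → Set.Icc (0:ℝ) 1 :=
  fun i => ⟨min 1 (dist s (u i)), le_min zero_le_one dist_nonneg, min_le_left _ _⟩

lemma trunc_uc {S : Type*} [MetricSpace S] (t : S) :
    UniformContinuous (fun s : S => min 1 (dist s t)) := by
  have : LipschitzWith 1 (fun s : S => min 1 (dist s t)) :=
    (LipschitzWith.dist_left t).const_min 1
  exact this.uniformContinuous

lemma cubeMap_uc {S : Type*} [MetricSpace S] (u : ℕ → S) : UniformContinuous (cubeMap u) := by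
  rw [uniformContinuous_pi]
  intro i
  exact UniformContinuous.subtype_mk (trunc_uc (u i)) _

lemma cubeMap_inj {S : Type*} [MetricSpace S] (u : ℕ → S) (hu : DenseRange u) :
    Function.Injective (cubeMap u) := by
  intro s t hst
  by_contra hne
  have hpos : 0 < dist s t := dist_pos.2 hne
  obtain ⟨i, hi⟩ := hu.exists_dist_lt s (show 0 < min 1 (dist s t / 2) from lt_min zero_lt_one (by positivity))
  have h1 : min 1 (dist s (u i)) = min 1 (dist t (u i)) := congrArg Subtype.val (congrFun hst i)
  rw [min_eq_right (hi.le.trans (min_le_left _ _))] at h1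
  have h2 : dist t (u i) = dist s (u i) := by
    rcases min_cases 1 (dist t (u i)) with ⟨q, _⟩ | ⟨q, _⟩ <;> rw [q] at h1
    · exact absurd (hi.trans_le (min_le_left _ _)) (by rw [h1]; exact lt_irrefl _)
    · exact h1.symm
  have h3 := dist_triangle_right s t (u i)
  have := hi.trans_le (min_le_right _ _)
  linarith

lemma repr_one {S : Type*} [MetricSpace S] [CompleteSpace S]
    [TopologicalSpace.SeparableSpace S] [MeasurableSpace S] [BorelSpace S] [Nonempty S]
    (u : ℕ → S) (hu : DenseRange u)
    (α β : ℕ → Measure S) [∀ n, IsFiniteMeasure (α n)] [∀ n, IsFiniteMeasure (β n)] (M : ℝ)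
    (hM : ∀ n, (α n).real Set.univ + (β n).real Set.univ ≤ M)
    (L : (S → ℝ) → ℝ)
    (hlim : ∀ f : S → ℝ, UniformContinuous f → (∃ C : ℝ, ∀ x, |f x| ≤ C) →
      Tendsto (fun n => DD (α n) (β n) f) atTop (𝓝 (L f)))
    (f : S → ℝ) (hf : UniformContinuous f) (C : ℝ) (hC : ∀ x, |f x| ≤ C) :
    ∃ P N : Measure S, IsFiniteMeasure P ∧ IsFiniteMeasure N ∧
      (∀ ψ : (ℕ → Set.Icc (0:ℝ) 1) → ℝ, Continuous ψ →
        L (fun s => ψ (cubeMap u s)) = DD P N (fun s => ψ (cubeMap u s))) ∧ L f = DD P N f := by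
  let e' : S → (ℕ → Set.Icc (0:ℝ) 1) × Set.Icc (-C) C :=
    fun s => (cubeMap u s, ⟨f s, abs_le.1 (hC s)⟩)
  have he' : UniformContinuous e' := (cubeMap_uc u).prodMk (hf.subtype_mk _)
  let A := closure (Set.range e')
  have : CompactSpace A := isCompact_iff_compactSpace.1 isClosed_closure.isCompact
  let e : S → A := fun s => ⟨e' s, subset_closure ⟨s, rfl⟩⟩
  have he : UniformContinuous e := he'.subtype_mk _
  have hd : DenseRange e := by
    intro z
    rw [closure_subtype]
    have : Subtype.val '' Set.range e = Set.range e' := by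
      rw [← Set.range_comp]; rfl
    rw [this]
    exact z.2
  obtain ⟨P, N, hP, hN, h⟩ := repr_compact e he hd u hu (fun i z => ((z.1.1 i : Set.Icc (0:ℝ) 1) : ℝ))
    (fun i => by fun_prop) (fun i s => rfl) α β M hM L hlim
  refine ⟨P, N, hP, hN, fun ψ hψ => ?_, ?_⟩
  · exact h (fun z => ψ z.1.1) (by fun_prop)
  · exact h (fun z => (z.1.2 : ℝ)) (by fun_prop)

/-- **`U_b(S)`-weak sequential completeness of `M(S)`.** If `(μ_n)` is a sequence of finite
signed Borel measures on a complete separable metric space such that `⟨μ_n, f⟩` is Cauchy for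
every bounded uniformly continuous `f : S → ℝ`, then there is a finite signed Borel measure `μ`
with `⟨μ_n, f⟩ → ⟨μ, f⟩` for every bounded uniformly continuous `f`. -/
theorem Ub_weakly_sequentially_complete {S : Type*} [MetricSpace S] [CompleteSpace S]
    [TopologicalSpace.SeparableSpace S] [MeasurableSpace S] [BorelSpace S]
    (μ : ℕ → SignedMeasure S)
    (hcauchy : ∀ f : S → ℝ, UniformContinuous f → (∃ C : ℝ, ∀ x, |f x| ≤ C) →
      CauchySeq (fun n => pairing (μ n) f)) :
    ∃ ν : SignedMeasure S, ∀ f : S → ℝ, UniformContinuous f → (∃ C : ℝ, ∀ x, |f x| ≤ C) →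
      Tendsto (fun n => pairing (μ n) f) atTop (𝓝 (pairing ν f)) := by
  rcases isEmpty_or_nonempty S with hS | hS
  · refine ⟨0, fun f _ _ => ?_⟩
    have h0 : ∀ ν : SignedMeasure S, pairing ν f = 0 := fun ν => by
      unfold pairing
      rw [Measure.eq_zero_of_isEmpty ν.toJordanDecomposition.posPart,
        Measure.eq_zero_of_isEmpty ν.toJordanDecomposition.negPart]
      simp
    simp only [h0]
    exact tendsto_const_nhds
  let α : ℕ → Measure S := fun n => (μ n).toJordanDecomposition.posPart
  let β : ℕ → Measure S := fun n => (μ n).toJordanDecomposition.negPart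
  have iα : ∀ n, IsFiniteMeasure (α n) := fun n => (μ n).toJordanDecomposition.posPart_finite
  have iβ : ∀ n, IsFiniteMeasure (β n) := fun n => (μ n).toJordanDecomposition.negPart_finite
  obtain ⟨M, hM⟩ := mass_bound α β (fun n => (μ n).toJordanDecomposition.mutuallySingular) (by
    intro f hf hb
    obtain ⟨C, hC⟩ := (hcauchy f hf hb).isBounded_range.exists_norm_le
    exact ⟨C, fun n => hC _ ⟨n, rfl⟩⟩)
  let L : (S → ℝ) → ℝ := fun f => limUnder atTop (fun n => pairing (μ n) f)
  have hlim : ∀ f : S → ℝ, UniformContinuous f → (∃ C : ℝ, ∀ x, |f x| ≤ C) →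
      Tendsto (fun n => DD (α n) (β n) f) atTop (𝓝 (L f)) := fun f hf hb =>
    (hcauchy f hf hb).tendsto_limUnder
  have hsc : SecondCountableTopology S := UniformSpace.secondCountable_of_separable S
  let u : ℕ → S := TopologicalSpace.denseSeq S
  have hu : DenseRange u := TopologicalSpace.denseRange_denseSeq S
  have hec : Continuous (cubeMap u) := (cubeMap_uc u).continuous
  have hme : MeasurableEmbedding (cubeMap u) := hec.measurableEmbedding (cubeMap_inj u hu)
  obtain ⟨P₀, N₀, hP₀, hN₀, h₀, -⟩ := repr_one u hu α β M hM L hlim (fun _ => 0)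
    uniformContinuous_const 0 (by simp)
  refine ⟨P₀.toSignedMeasure - N₀.toSignedMeasure, fun f hf hb => ?_⟩
  obtain ⟨C, hC⟩ := hb
  have hfm : Measurable f := hf.continuous.measurable
  rw [DD_congr_jordan P₀ N₀ hfm hC]
  obtain ⟨P, N, hP, hN, h1, h2⟩ := repr_one u hu α β M hM L hlim f hf C hC
  have hmap : (P₀ + N).map (cubeMap u) = (P + N₀).map (cubeMap u) := by
    apply ext_of_forall_integral_eq_of_IsFiniteMeasure
    intro ψ
    have e1 := (h₀ ψ ψ.continuous).symm.trans (h1 ψ ψ.continuous)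
    have hi : ∀ (γ : Measure S) [IsFiniteMeasure γ], Integrable (fun s => ψ (cubeMap u s)) γ := by
      intro γ _
      exact integrable_of_bdd γ (ψ.continuous.comp hec).measurable (C := ‖ψ‖)
        fun s => ψ.norm_coe_le_norm _
    rw [hme.integral_map, hme.integral_map, integral_add_measure (hi _) (hi _),
      integral_add_measure (hi _) (hi _)]
    unfold DD at e1
    linarith
  have heq : P₀ + N = P + N₀ := by
    rw [← hme.comap_map (P₀ + N), hmap, hme.comap_map]
  have hfi : ∀ (γ : Measure S) [IsFiniteMeasure γ], Integrable f γ := fun γ _ =>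
    integrable_of_bdd γ hfm hC
  have e2 : ∫ x, f x ∂(P₀ + N) = ∫ x, f x ∂(P + N₀) := by rw [heq]
  rw [integral_add_measure (hfi _) (hfi _), integral_add_measure (hfi _) (hfi _)] at e2
  have e3 : DD P₀ N₀ f = L f := by
    rw [h2]
    unfold DD
    linarith
  rw [e3]
  exact hlim f hf ⟨C, hC⟩
end
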